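/- arXiv:2310.09227 — 2 statements merged into one kernel-verified Lean document; each statement's English description precedes it below -/
import Mathlib

section
/- Let 0 ≤ ℓ ≤ k be integers, n ≥ 3k − 1, and λ ∈ ℤ. Let L = A_{n,k,k,ℓ} − λI, a square integer matrix indexed by the k-element subsets of {1,…,n}. For 0 ≤ s ≤ k let M_s be the (k−s+1) × (k−s+1) integer matrix with rows and columns indexed by integers s ≤ i, j ≤ k and entries M_s(i,j) = −λδ_{i,j} + C(j−s, i−s) · f_i(j; n, k, k, ℓ). Then there is an isomorphism of abelian groups S(L) ≅ ⊕_{s=0}^{k} S(M_s)^{m_s}, where m_s = C(n,s) − 2C(n,s−1) + C(n,s−2). -/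
open scoped Classical

/-- Integer binomial coefficient with the convention `C x y = 0` unless `0 ≤ y ≤ x`. -/
noncomputable def C (x y : ℤ) : ℤ :=
  if 0 ≤ y ∧ y ≤ x then (x.toNat).choose y.toNat else 0

/-- The `k`-element subsets of `{1,…,n}`. -/
def ksubsets (n k : ℕ) : Finset (Finset ℕ) :=
  (Finset.Icc 1 n).powerset.filter fun A => A.card = k

/-- The subset intersection matrix `A_{n,kr,kc,ℓ}`. -/
noncomputable def interMat (n kr kc ℓ : ℕ) :
    Matrix ↥(ksubsets n kr) ↥(ksubsets n kc) ℤ :=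
  Matrix.of fun A B => if ((A : Finset ℕ) ∩ (B : Finset ℕ)).card = ℓ then 1 else 0

/-- `f_i(j; n, kr, kc, ℓ)`. -/
noncomputable def f (n kr kc ℓ i j : ℕ) : ℤ :=
  ∑ v ∈ Finset.range (i + 1),
    (-1 : ℤ) ^ (i + v) * (i.choose v) *
      (C ((kr : ℤ) - v) ((ℓ : ℤ) - v) * C ((n : ℤ) - kr - j + v) ((kc : ℤ) - ℓ - j + v))

/-- The Smith group of an integer matrix: the quotient of the free abelian group of
integer vectors indexed by the columns by the subgroup generated by the rows. -/
abbrev SmithGroup {ρ γ : Type*} (M : Matrix ρ γ ℤ) : Type _ :=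
  (γ → ℤ) ⧸ Submodule.span ℤ (Set.range fun r : ρ => M r)

/-- The matrix `M_s` of Definition 4.1, with rows and columns indexed by
`s ≤ i, j ≤ k` (here `i = s + t`, `j = s + u`):
`M_s(i,j) = −λ δ_{i,j} + C(j−s,i−s)·f_i(j)`. -/
noncomputable def Ms (n k ℓ : ℕ) (lam : ℤ) (s : ℕ) :
    Matrix (Fin (k - s + 1)) (Fin (k - s + 1)) ℤ :=
  Matrix.of fun t u =>
    (if t = u then -lam else 0) +
      ((u : ℕ).choose (t : ℕ) : ℤ) * f n k k ℓ (s + t) (s + u)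

/-- `m_s = C(n,s) − 2C(n,s−1) + C(n,s−2)`. -/
noncomputable def msMult (n s : ℕ) : ℤ :=
  C n s - 2 * C n ((s : ℤ) - 1) + C n ((s : ℤ) - 2)

/-!
For a set `T` let `χ_T` be the indicator of the `k`-subsets containing `T`. When `T` runs over the
two-row standard sets with `#T ≤ k`, the `χ_T` are the columns of a unimodular matrix `P`: splitting
off the largest element reduces this to smaller ground sets, except for layers just beyond the
middle, which are reached by complementation. The number of `k`-subsets `U ⊇ T` with `#(b ∩ U) = ℓ`
depends only on `#T` and `#(T ∩ b)`, so by Newton interpolation `A P = P D`, where `D` has the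
entry `f_{#U}(#T)` at standard sets `U ⊆ T` and vanishes elsewhere.

For fixed `R`, the indicators of the standard sets containing `R` and having `#R + t` elements span
a space of row vectors that `D` leaves invariant and on which it acts by `M_{#R}` (for `λ = 0`).
These spaces decompose `D` completely if `R` runs over a family `S` such that for each `j ≤ k` the
members of `S` of size at most `j` index a unimodular basis of the functions on the standard sets of
size `j`. To construct `S`, split off the smallest elements one by one, recording in a shift how
many of them have been used, until all remaining sets with at most the allowed number of elements
are standard; there `S` is given by the standard sets for a larger shift, provided `n ≥ 3 k - 1`.
Since `C(n,j) - C(n,j-1)` standard sets have size `j`, differencing once more yields `m_s` members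
of size `s` in `S`.
-/

open Finset Matrix
open scoped FinsetFamily

section SmithGroup

variable {ρ γ ρ' γ' : Type*} [Fintype ρ]

/-- The lattice spanned by the rows of an integer matrix, by which its Smith group is the
quotient. -/
abbrev rowSpan {ρ γ : Type*} (M : Matrix ρ γ ℤ) : Submodule ℤ (γ → ℤ) :=
  Submodule.span ℤ (Set.range fun r : ρ => M r)

theorem range_vecMulLinear_eq_rowSpan (M : Matrix ρ γ ℤ) :
    LinearMap.range M.vecMulLinear = rowSpan M :=
  range_vecMulLinear M

theorem map_rowSpan_eq_rowSpan [Fintype γ] [Fintype ρ'] {A : Matrix ρ γ ℤ} {B : Matrix ρ' γ' ℤ}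
    {P : Matrix γ γ' ℤ} {Q : Matrix ρ ρ' ℤ} (hQ : Function.Surjective Q.vecMul)
    (h : A * P = Q * B) :
    (rowSpan A).map P.vecMulLinear = rowSpan B := by
  have comp_eq : P.vecMulLinear ∘ₗ A.vecMulLinear = B.vecMulLinear ∘ₗ Q.vecMulLinear :=
    LinearMap.ext fun x => by
      simp only [LinearMap.comp_apply, vecMulLinear_apply, vecMul_vecMul, h]
  rw [← range_vecMulLinear_eq_rowSpan, ← range_vecMulLinear_eq_rowSpan, ← LinearMap.range_comp,
    comp_eq, LinearMap.range_comp_of_range_eq_top _ (LinearMap.range_eq_top.2 hQ)]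

/-- Smith groups of matrices that are equivalent over `ℤ`: `P` is an invertible change of the
column basis and the rows of `Q` generate all row vectors. -/
noncomputable def smithGroupEquivOfMulEqMul [Fintype γ] [Fintype ρ'] {A : Matrix ρ γ ℤ}
    {B : Matrix ρ' γ' ℤ} {P : Matrix γ γ' ℤ} {Q : Matrix ρ ρ' ℤ}
    (hP : Function.Bijective P.vecMul) (hQ : Function.Surjective Q.vecMul) (h : A * P = Q * B) :
    SmithGroup A ≃+ SmithGroup B :=
  (Submodule.Quotient.equiv _ _ (LinearEquiv.ofBijective P.vecMulLinear hP)
    (map_rowSpan_eq_rowSpan hQ h)).toAddEquiv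

variable {ι : Type*} [Fintype ι] [DecidableEq ι] {m n : ι → Type*} [∀ i, Fintype (m i)]

theorem vecMul_blockDiagonal'_apply (M : ∀ i, Matrix (m i) (n i) ℤ) (x : (Σ i, m i) → ℤ) (i : ι)
    (j : n i) : (x ᵥ* blockDiagonal' M) ⟨i, j⟩ = ((fun r => x ⟨i, r⟩) ᵥ* M i) j := by
  simp only [vecMul, dotProduct, Fintype.sum_sigma]
  refine (sum_eq_single i (fun k _ hk => ?_) (by simp)).trans ?_
  · exact sum_eq_zero fun r _ => by rw [blockDiagonal'_apply_ne M _ _ hk, mul_zero]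
  · simp only [blockDiagonal'_apply_eq]

theorem map_piCurry_rowSpan_blockDiagonal' (M : ∀ i, Matrix (m i) (n i) ℤ) :
    (rowSpan (blockDiagonal' M)).map (LinearEquiv.piCurry ℤ fun i (_ : n i) => ℤ : _ →ₗ[ℤ] _) =
      Submodule.pi Set.univ fun i => rowSpan (M i) := by
  simp only [← range_vecMulLinear_eq_rowSpan]
  ext y
  simp only [Submodule.mem_map, LinearMap.mem_range, Submodule.mem_pi, Set.mem_univ, true_imp_iff]
  constructor
  · rintro ⟨_, ⟨x, rfl⟩, rfl⟩ i
    exact ⟨fun r => x ⟨i, r⟩, funext fun j => (vecMul_blockDiagonal'_apply M x i j).symm⟩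
  · intro hy
    choose x hx using hy
    refine ⟨_, ⟨fun p => x p.1 p.2, rfl⟩, funext fun i => ?_⟩
    rw [← hx i]
    exact funext fun j => vecMul_blockDiagonal'_apply M _ i j

/-- The Smith group of a block diagonal matrix as the product of the Smith groups of its blocks. -/
noncomputable def smithGroupBlockDiagonalEquiv (M : ∀ i, Matrix (m i) (n i) ℤ) :
    SmithGroup (blockDiagonal' M) ≃+ ∀ i, SmithGroup (M i) :=
  ((Submodule.Quotient.equiv _ _ _ (map_piCurry_rowSpan_blockDiagonal' M)).trans
    (Submodule.quotientPi _)).toAddEquiv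

end SmithGroup

theorem vecMul_bijective_of_mul_eq_one {R m n : Type*} [CommRing R] [Fintype m] [Fintype n]
    [DecidableEq n] {M : Matrix m n R} {N : Matrix n m R}
    (hcard : Fintype.card m = Fintype.card n) (h : N * M = 1) : Function.Bijective M.vecMul := by
  have h' : M * N = 1 := (mul_eq_one_comm_of_card_eq _ _ _ hcard).2 h
  refine Function.bijective_iff_has_inverse.2 ⟨N.vecMul, fun x => ?_, fun y => ?_⟩
  · simp only [vecMul_vecMul, h', vecMul_one]
  · simp only [vecMul_vecMul, h, vecMul_one]

/-- Regroups a product indexed by `ι` along the fibres of `φ`, the factor at `i` depending only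
on `φ i`. -/
def piFiberAddEquiv {ι κ : Type*} (φ : ι → κ) (G : κ → Type*) [∀ s, AddCommGroup (G s)] :
    (∀ i, G (φ i)) ≃+ ∀ s, {i // φ i = s} → G s :=
  AddEquiv.symm
    { toFun y i := y (φ i) ⟨i, rfl⟩
      invFun x s i := i.2 ▸ x i.1
      left_inv y := by
        ext s ⟨i, rfl⟩
        rfl
      right_inv _ := rfl
      map_add' _ _ := rfl }

section InclusionUnimodular

variable {α : Type*} [DecidableEq α]

/-- The inclusion matrix of two families of sets. -/
def inclusionMatrix (S B : Finset (Finset α)) : Matrix B S ℤ :=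
  of fun b T => if (T : Finset α) ⊆ b then 1 else 0

/-- The inclusion matrix of `S` and `B` is square and invertible over `ℤ`. Injectivity being
automatic for square matrices, only surjectivity is asked for; the integer vectors are functions
on all finite sets, so that `S` and `B` can be varied. -/
structure IsInclusionUnimodular (S B : Finset (Finset α)) : Prop where
  card_eq : #S = #B
  exists_sum_eq (h : Finset α → ℤ) : ∃ x : Finset α → ℤ, ∀ b ∈ B, ∑ T ∈ S with T ⊆ b, x T = h b

theorem sum_nonMemberSubfamily_add_sum_memberSubfamily {M : Type*} [AddCommMonoid M] (v : α)
    (S : Finset (Finset α)) (g : Finset α → M) :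
    ∑ T ∈ S.nonMemberSubfamily v, g T + ∑ T ∈ S.memberSubfamily v, g (insert v T) =
      ∑ T ∈ S, g T := by
  rw [← sum_filter_add_sum_filter_not S (v ∈ ·), add_comm, nonMemberSubfamily, memberSubfamily,
    sum_image ((erase_injOn' v).mono (by simp))]
  exact congrArg (· + _) (sum_congr rfl fun T hT => by rw [insert_erase (mem_filter.1 hT).2])

namespace IsInclusionUnimodular

theorem vecMul_bijective {S B : Finset (Finset α)} (hSB : IsInclusionUnimodular S B) :
    Function.Bijective (inclusionMatrix S B).vecMul := by
  choose x hx using fun b : B => hSB.exists_sum_eq fun b' => if b' = b then 1 else 0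
  let X : Matrix S B ℤ := of fun T b => x b T
  have mul_eq_one : inclusionMatrix S B * X = 1 := by
    ext b b'
    simp only [X, mul_apply, inclusionMatrix, of_apply, ite_mul, one_mul, zero_mul, one_apply]
    rw [sum_coe_sort S fun T => if T ⊆ b then x b' T else 0, ← sum_filter, hx b' b b.2]
    simp only [Subtype.ext_iff]
  have hcard : Fintype.card B = Fintype.card S := by simpa using hSB.card_eq.symm
  exact vecMul_bijective_of_mul_eq_one hcard ((mul_eq_one_comm_of_card_eq _ _ _ hcard).1 mul_eq_one)

theorem singleton_empty : IsInclusionUnimodular ({∅} : Finset (Finset α)) {∅} :=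
  ⟨rfl, fun h => ⟨h, by simp [filter_singleton]⟩⟩

/-- Solve first on the sets without `v`, then correct on the sets containing it. -/
theorem of_subfamilies (v : α) {S B : Finset (Finset α)}
    (h₀ : IsInclusionUnimodular (S.nonMemberSubfamily v) (B.nonMemberSubfamily v))
    (h₁ : IsInclusionUnimodular (S.memberSubfamily v) (B.memberSubfamily v)) :
    IsInclusionUnimodular S B := by
  refine ⟨?_, fun h => ?_⟩
  · rw [← card_memberSubfamily_add_card_nonMemberSubfamily v S, h₀.card_eq, h₁.card_eq,
      card_memberSubfamily_add_card_nonMemberSubfamily]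
  obtain ⟨x₀, hx₀⟩ := h₀.exists_sum_eq h
  obtain ⟨x₁, hx₁⟩ := h₁.exists_sum_eq fun b =>
    h (insert v b) - ∑ T ∈ S.nonMemberSubfamily v with T ⊆ b, x₀ T
  let x (T : Finset α) : ℤ := if v ∈ T then x₁ (T.erase v) else x₀ T
  have sum_x (b : Finset α) : ∑ T ∈ S with T ⊆ b, x T =
      ∑ T ∈ S.nonMemberSubfamily v with T ⊆ b, x₀ T +
        ∑ T ∈ S.memberSubfamily v with insert v T ⊆ b, x₁ T := by
    simp only [sum_filter]
    rw [← sum_nonMemberSubfamily_add_sum_memberSubfamily v S]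
    congr 1 <;> refine sum_congr rfl fun T hT => ?_
    · simp [x, (mem_nonMemberSubfamily.1 hT).2]
    · simp [x, (mem_memberSubfamily.1 hT).2]
  refine ⟨x, fun b hb => ?_⟩
  rw [sum_x]
  by_cases hvb : v ∈ b
  · obtain ⟨b, hv, rfl⟩ : ∃ b', v ∉ b' ∧ insert v b' = b :=
      ⟨b.erase v, notMem_erase v b, insert_erase hvb⟩
    rw [filter_congr fun T hT =>
        subset_insert_iff_of_notMem (mem_nonMemberSubfamily.1 hT).2,
      filter_congr fun T hT => insert_subset_insert_iff (mem_memberSubfamily.1 hT).2,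
      hx₁ b (mem_memberSubfamily.2 ⟨hb, hv⟩), add_sub_cancel]
  · rw [hx₀ b (mem_nonMemberSubfamily.2 ⟨hb, hvb⟩), filter_false_of_mem, sum_empty, add_zero]
    exact fun T _ hT => hvb (hT (mem_insert_self v T))

/-- Inclusion–exclusion: a solution `y` for `B` yields the solution
`x T = (-1) ^ #T * ∑ R ⊇ T, y R` for the complements. -/
theorem image_sdiff {S B : Finset (Finset α)} {V : Finset α} (hB : B ⊆ V.powerset)
    (hSV : S ⊆ V.powerset) (hS : IsLowerSet (S : Set (Finset α)))
    (h : IsInclusionUnimodular S B) : IsInclusionUnimodular S (B.image (V \ ·)) := by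
  have sdiff_injOn : Set.InjOn (V \ ·) (B : Set (Finset α)) :=
    Set.LeftInvOn.injOn (f₁' := (V \ ·)) fun b hb =>
      Finset.sdiff_sdiff_eq_self (mem_powerset.1 (hB hb))
  refine ⟨by rw [card_image_of_injOn sdiff_injOn, h.card_eq], fun g => ?_⟩
  obtain ⟨y, hy⟩ := h.exists_sum_eq fun b => g (V \ b)
  refine ⟨fun T => ∑ R ∈ S with T ⊆ R, (-1) ^ #T * y R, forall_mem_image.2 fun b hb => ?_⟩
  calc ∑ T ∈ S with T ⊆ V \ b, ∑ R ∈ S with T ⊆ R, (-1) ^ #T * y R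
      = ∑ R ∈ S, ∑ T ∈ (R \ b).powerset, (-1) ^ #T * y R := by
        refine sum_comm' fun T R => ?_
        simp only [mem_filter, mem_powerset, subset_sdiff]
        constructor
        · rintro ⟨⟨-, -, hTb⟩, hR, hTR⟩
          exact ⟨⟨hTR, hTb⟩, hR⟩
        · rintro ⟨⟨hTR, hTb⟩, hR⟩
          exact ⟨⟨hS hTR hR, hTR.trans (mem_powerset.1 (hSV hR)), hTb⟩, hR, hTR⟩
    _ = ∑ R ∈ S with R ⊆ b, y R := by
        simp only [← sum_mul, sum_powerset_neg_one_pow_card, sdiff_eq_empty_iff_subset, ite_mul,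
          one_mul, zero_mul, sum_filter]
    _ = g (V \ b) := hy b hb

end IsInclusionUnimodular

end InclusionUnimodular

section Layers

variable {α : Type*} [DecidableEq α] {S 𝒜 : Finset (Finset α)} {V : Finset α} {j k : ℕ} {v : α}

theorem nonMemberSubfamily_powerset_insert (hv : v ∉ V) :
    (insert v V).powerset.nonMemberSubfamily v = V.powerset := by
  ext T
  simp only [mem_nonMemberSubfamily, mem_powerset]
  exact ⟨fun h => (subset_insert_iff_of_notMem h.2).1 h.1,
    fun h => ⟨h.trans (subset_insert v V), fun hT => hv (h hT)⟩⟩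

theorem memberSubfamily_powerset_insert (hv : v ∉ V) :
    (insert v V).powerset.memberSubfamily v = V.powerset := by
  rw [← nonMemberSubfamily_powerset_insert hv]
  ext T
  simp [insert_subset_iff]

/-- The sets of size at most `j` in `S` and those of size exactly `j` in `𝒜` have a unimodular
inclusion matrix. -/
def IsLayerBasis (j : ℕ) (S 𝒜 : Finset (Finset α)) : Prop :=
  IsInclusionUnimodular {T ∈ S | #T ≤ j} (𝒜 # j)

/-- `S` serves as a basis for all the layers of `𝒜` up to the `k`-th one simultaneously. -/
structure IsLayeredBasis (k : ℕ) (S 𝒜 : Finset (Finset α)) : Prop where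
  card_le : ∀ T ∈ S, #T ≤ k
  isLayerBasis : ∀ j ≤ k, IsLayerBasis j S 𝒜

theorem IsLayerBasis.zero (hS : ∅ ∈ S) (h𝒜 : ∅ ∈ 𝒜) : IsLayerBasis 0 S 𝒜 := by
  have hS₀ : {T ∈ S | #T ≤ 0} = {∅} := by
    ext T
    rcases eq_or_ne T ∅ with rfl | hT <;> simp [*]
  have h𝒜₀ : 𝒜 # 0 = {∅} := by
    ext T
    rcases eq_or_ne T ∅ with rfl | hT <;> simp [mem_slice, *]
  rw [IsLayerBasis, hS₀, h𝒜₀]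
  exact .singleton_empty

theorem IsLayerBasis.zero_of_nonMemberSubfamily
    (h : IsLayerBasis 0 (S.nonMemberSubfamily v) (𝒜.nonMemberSubfamily v)) :
    IsLayerBasis 0 S 𝒜 := by
  unfold IsLayerBasis at h ⊢
  convert h using 1 <;> ext T <;> rcases eq_or_ne T ∅ with rfl | hT <;> simp [mem_slice, *]

theorem IsLayerBasis.succ_of_subfamilies
    (h₀ : IsLayerBasis (j + 1) (S.nonMemberSubfamily v) (𝒜.nonMemberSubfamily v))
    (h₁ : IsLayerBasis j (S.memberSubfamily v) (𝒜.memberSubfamily v)) :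
    IsLayerBasis (j + 1) S 𝒜 := by
  unfold IsLayerBasis at h₀ h₁ ⊢
  refine .of_subfamilies v ?_ ?_
  · convert h₀ using 1 <;> ext T <;> simp [mem_slice, and_right_comm]
  · convert h₁ using 1 <;> ext T <;> by_cases hv : v ∈ T <;> simp [mem_slice, hv]

theorem IsLayerBasis.succ_of_card_eq (h : IsLayerBasis k S V.powerset) (hV : #V = 2 * k + 1)
    (hSV : S ⊆ V.powerset) (hS : IsLowerSet (S : Set (Finset α))) (hSk : ∀ T ∈ S, #T ≤ k) :
    IsLayerBasis (k + 1) S V.powerset := by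
  have slice_succ : V.powerset # (k + 1) = (V.powerset # k).image (V \ ·) := by
    ext T
    simp only [mem_slice, mem_powerset, mem_image]
    constructor
    · rintro ⟨hTV, hT⟩
      exact ⟨V \ T, ⟨sdiff_subset, by rw [card_sdiff_of_subset hTV]; omega⟩,
        Finset.sdiff_sdiff_eq_self hTV⟩
    · rintro ⟨U, ⟨hUV, hU⟩, rfl⟩
      exact ⟨sdiff_subset, by rw [card_sdiff_of_subset hUV]; omega⟩
  unfold IsLayerBasis at h ⊢
  rw [filter_true_of_mem hSk] at h
  rw [filter_true_of_mem fun T hT => (hSk T hT).trans k.le_succ, slice_succ]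
  exact h.image_sdiff slice_subset hSV hS

theorem IsLayeredBasis.succ_of_subfamilies
    (h₀ : IsLayeredBasis (k + 1) (S.nonMemberSubfamily v) (𝒜.nonMemberSubfamily v))
    (h₁ : IsLayeredBasis k (S.memberSubfamily v) (𝒜.memberSubfamily v)) :
    IsLayeredBasis (k + 1) S 𝒜 where
  card_le T hT := by
    by_cases hv : v ∈ T
    · have hT' : T.erase v ∈ S.memberSubfamily v := by simp [insert_erase hv, hT]
      simpa [card_erase_of_mem hv] using h₁.card_le _ hT'
    · exact h₀.card_le T (mem_nonMemberSubfamily.2 ⟨hT, hv⟩)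
  isLayerBasis
    | 0, _ => .zero_of_nonMemberSubfamily (h₀.isLayerBasis 0 k.succ.zero_le)
    | j + 1, hj => .succ_of_subfamilies (h₀.isLayerBasis _ hj)
        (h₁.isLayerBasis _ (Nat.le_of_succ_le_succ hj))

theorem IsLayeredBasis.union_image_insert {S₀ S₁ : Finset (Finset α)}
    (hS₀ : ∀ T ∈ S₀, v ∉ T) (hS₁ : ∀ T ∈ S₁, v ∉ T)
    (h₀ : IsLayeredBasis (k + 1) S₀ (𝒜.nonMemberSubfamily v))
    (h₁ : IsLayeredBasis k S₁ (𝒜.memberSubfamily v)) :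
    IsLayeredBasis (k + 1) (S₀ ∪ S₁.image (insert v)) 𝒜 := by
  apply IsLayeredBasis.succ_of_subfamilies (v := v)
  · rwa [nonMemberSubfamily_union, nonMemberSubfamily_image_insert, union_empty,
      nonMemberSubfamily, filter_true_of_mem hS₀]
  · rwa [memberSubfamily_union, memberSubfamily_image_insert hS₁,
      memberSubfamily, filter_false_of_mem hS₀, image_empty, empty_union]

end Layers

section ShiftedStandard

/-- The `i`-th smallest element of `T` is at least `2 * i + c`. For `c = 0` these are the second
rows of the standard Young tableaux with two rows; the shift `c` is the deficit left by the elements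
that have already been split off. -/
def IsShiftedStandard (c : ℕ) (T : Finset ℕ) : Prop :=
  ∀ t ∈ T, 2 * #{x ∈ T | x ≤ t} + c ≤ t

variable {c k n a : ℕ} {T U V : Finset ℕ}

theorem isShiftedStandard_empty : IsShiftedStandard c ∅ := by
  simp [IsShiftedStandard]

theorem IsShiftedStandard.mono (hT : IsShiftedStandard c T) (hU : U ⊆ T) :
    IsShiftedStandard c U := fun t ht =>
  (by gcongr : 2 * #{x ∈ U | x ≤ t} + c ≤ 2 * #{x ∈ T | x ≤ t} + c).trans (hT t (hU ht))

theorem isShiftedStandard_insert_of_forall_lt (hT : ∀ t ∈ T, t < n) :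
    IsShiftedStandard c (insert n T) ↔ IsShiftedStandard c T ∧ 2 * (#T + 1) + c ≤ n := by
  have hn : n ∉ T := fun h => lt_irrefl n (hT n h)
  have filter_le_n : {x ∈ insert n T | x ≤ n} = insert n T :=
    filter_true_of_mem <| forall_mem_insert .. |>.2 ⟨le_rfl, fun x hx => (hT x hx).le⟩
  have filter_le_of_mem (t : ℕ) (ht : t ∈ T) : {x ∈ insert n T | x ≤ t} = {x ∈ T | x ≤ t} := by
    rw [filter_insert, if_neg (hT t ht).not_ge]
  rw [IsShiftedStandard, forall_mem_insert, filter_le_n, card_insert_of_notMem hn, and_comm]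
  exact and_congr_left' (forall₂_congr fun t ht => by rw [filter_le_of_mem t ht])

theorem isShiftedStandard_insert_of_forall_gt (hT : ∀ t ∈ T, a < t) :
    IsShiftedStandard c (insert a T) ↔ IsShiftedStandard (c + 2) T ∧ c + 2 ≤ a := by
  have ha : a ∉ T := fun h => lt_irrefl a (hT a h)
  have filter_le_a : {x ∈ insert a T | x ≤ a} = {a} := by
    rw [filter_insert, if_pos le_rfl, filter_false_of_mem fun t ht => (hT t ht).not_ge,
      insert_empty_eq]
  have card_filter_le (t : ℕ) (ht : t ∈ T) :
      #{x ∈ insert a T | x ≤ t} = #{x ∈ T | x ≤ t} + 1 := by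
    rw [filter_insert, if_pos (hT t ht).le, card_insert_of_notMem (by simp [ha])]
  rw [IsShiftedStandard, forall_mem_insert, filter_le_a, card_singleton, and_comm, mul_one,
    add_comm 2]
  refine and_congr_left' (forall₂_congr fun t ht => ?_)
  rw [card_filter_le t ht, mul_add_one, add_assoc, add_comm 2]

theorem IsShiftedStandard.two_mul_card_add_le (hT : IsShiftedStandard c T) (hTn : T ⊆ Ioc a n)
    (hne : T.Nonempty) : 2 * #T + c ≤ n := by
  have hmax := hT _ (T.max'_mem hne)
  rw [filter_true_of_mem fun x hx => T.le_max' x hx] at hmax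
  exact hmax.trans (mem_Ioc.1 (hTn (T.max'_mem hne))).2

theorem isShiftedStandard_of_subset_Ioc (hTn : T ⊆ Ioc (k + c) n) (hTk : #T ≤ k) :
    IsShiftedStandard c T := fun t ht => by
  have ht' := (mem_Ioc.1 (hTn ht)).1
  have card_le : #{x ∈ T | x ≤ t} ≤ #T := card_filter_le _ _
  have card_le_sub : #{x ∈ T | x ≤ t} ≤ #(Ioc (k + c) t) := card_le_card fun x hx =>
    mem_Ioc.2 ⟨(mem_Ioc.1 (hTn (mem_filter.1 hx).1)).1, (mem_filter.1 hx).2⟩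
  rw [Nat.card_Ioc] at card_le_sub
  omega

/-- The family of all `c`-shifted standard subsets of `V`. -/
noncomputable def standardFamily (c : ℕ) (V : Finset ℕ) : Finset (Finset ℕ) :=
  {T ∈ V.powerset | IsShiftedStandard c T}

theorem mem_standardFamily : T ∈ standardFamily c V ↔ T ⊆ V ∧ IsShiftedStandard c T := by
  rw [standardFamily, mem_filter, mem_powerset]

theorem isLowerSet_standardFamily : IsLowerSet (standardFamily c V : Set (Finset ℕ)) :=
  fun T U hUT hT => by
    rw [mem_coe, mem_standardFamily] at hT ⊢
    exact ⟨hUT.trans hT.1, hT.2.mono hUT⟩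

theorem empty_mem_standardFamily : ∅ ∈ standardFamily c V :=
  mem_standardFamily.2 ⟨empty_subset V, isShiftedStandard_empty⟩

theorem nonMemberSubfamily_standardFamily_insert {v : ℕ} (hv : v ∉ V) :
    (standardFamily c (insert v V)).nonMemberSubfamily v = standardFamily c V := by
  ext T
  rw [mem_standardFamily, ← mem_powerset, ← nonMemberSubfamily_powerset_insert hv]
  simp [standardFamily, and_right_comm]

theorem memberSubfamily_standardFamily_insert_of_forall_lt (hV : ∀ x ∈ V, x < n) :
    (standardFamily c (insert n V)).memberSubfamily n =
      {T ∈ standardFamily c V | 2 * (#T + 1) + c ≤ n} := by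
  have hn : n ∉ V := fun h => lt_irrefl n (hV n h)
  ext T
  have mem_member := congrArg (T ∈ ·) (memberSubfamily_powerset_insert hn)
  simp only [mem_memberSubfamily, mem_powerset, eq_iff_iff] at mem_member
  rw [mem_memberSubfamily, mem_standardFamily, and_right_comm, mem_member, mem_filter,
    mem_standardFamily, and_assoc]
  exact and_congr_right fun hT => isShiftedStandard_insert_of_forall_lt fun t ht => hV t (hT ht)

theorem memberSubfamily_standardFamily_insert_of_forall_gt (hV : ∀ x ∈ V, a < x) (hca : c + 2 ≤ a) :
    (standardFamily c (insert a V)).memberSubfamily a = standardFamily (c + 2) V := by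
  have ha : a ∉ V := fun h => lt_irrefl a (hV a h)
  ext T
  have mem_member := congrArg (T ∈ ·) (memberSubfamily_powerset_insert ha)
  simp only [mem_memberSubfamily, mem_powerset, eq_iff_iff] at mem_member
  rw [mem_memberSubfamily, mem_standardFamily, and_right_comm, mem_member, mem_standardFamily]
  refine and_congr_right fun hT => ?_
  rw [isShiftedStandard_insert_of_forall_gt fun t ht => hV t (hT ht), and_iff_left hca]

theorem standardFamily_insert_of_lt (hac : a < c + 2) :
    standardFamily c (insert a V) = standardFamily c V := by
  ext T
  simp only [mem_standardFamily]
  refine and_congr_left fun hT => ⟨fun hTV => ?_, fun hTV => hTV.trans (subset_insert a V)⟩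
  refine (subset_insert_iff_of_notMem fun haT => ?_).1 hTV
  have card_pos : 0 < #{x ∈ T | x ≤ a} := card_pos.2 ⟨a, by simp [haT]⟩
  have := hT a haT
  omega

theorem isLayerBasis_standardFamily_insert (hV : ∀ x ∈ V, x < n) (hkn : 2 * (k + 1) + c ≤ n)
    (h₀ : IsLayerBasis (k + 1) (standardFamily c V) V.powerset)
    (h₁ : IsLayerBasis k (standardFamily c V) V.powerset) :
    IsLayerBasis (k + 1) (standardFamily c (insert n V)) (insert n V).powerset := by
  have hn : n ∉ V := fun h => lt_irrefl n (hV n h)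
  apply IsLayerBasis.succ_of_subfamilies (v := n)
  · rwa [nonMemberSubfamily_standardFamily_insert hn, nonMemberSubfamily_powerset_insert hn]
  · rw [memberSubfamily_standardFamily_insert_of_forall_lt hV, memberSubfamily_powerset_insert hn]
    rwa [IsLayerBasis, filter_filter,
      filter_congr fun T _ => and_iff_right_of_imp (by omega : #T ≤ k → 2 * (#T + 1) + c ≤ n)]

theorem isLayerBasis_standardFamily_Ioc (hkn : 2 * k + c ≤ n + 1) :
    IsLayerBasis k (standardFamily c (Ioc c n)) (Ioc c n).powerset := by
  induction n generalizing k with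
  | zero =>
    obtain rfl : k = 0 := by omega
    exact .zero empty_mem_standardFamily (empty_mem_powerset _)
  | succ n ih =>
    have insertion (k : ℕ) (hk : k = 0 ∨ 2 * k + c ≤ n + 1) :
        IsLayerBasis k (standardFamily c (Ioc c (n + 1))) (Ioc c (n + 1)).powerset := by
      rcases k with _ | k
      · exact .zero empty_mem_standardFamily (empty_mem_powerset _)
      · rw [← insert_Ioc_right_eq_Ioc_add_one (by omega : c ≤ n)]
        exact isLayerBasis_standardFamily_insert (by simp) (by omega) (ih (by omega))
          (ih (by omega))
    by_cases hk : k = 0 ∨ 2 * k + c ≤ n + 1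
    · exact insertion k hk
    obtain ⟨k, rfl⟩ := Nat.exists_eq_succ_of_ne_zero (fun h => hk (.inl h))
    refine (insertion k (by omega)).succ_of_card_eq (by rw [Nat.card_Ioc]; omega)
      (filter_subset _ _) isLowerSet_standardFamily fun T hT => ?_
    rw [mem_standardFamily] at hT
    rcases T.eq_empty_or_nonempty with rfl | hne
    · simp
    · have := hT.2.two_mul_card_add_le hT.1 hne
      omega

theorem isLayeredBasis_standardFamily_Ioc_add (hkn : 3 * k + c ≤ n + 1) :
    IsLayeredBasis k {T ∈ standardFamily (k + c) (Ioc (k + c) n) | #T ≤ k}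
      (standardFamily c (Ioc (k + c) n)) := by
  refine ⟨fun T hT => (mem_filter.1 hT).2, fun j hj => ?_⟩
  have slice_eq : (standardFamily c (Ioc (k + c) n)) # j = (Ioc (k + c) n).powerset # j := by
    ext T
    rw [mem_slice, mem_slice, mem_standardFamily, mem_powerset, and_congr_left_iff]
    exact fun hT =>
      and_iff_left_of_imp fun hTn => isShiftedStandard_of_subset_Ioc hTn (hT.trans_le hj)
  rw [IsLayerBasis, slice_eq, filter_filter,
    filter_congr fun T _ => and_iff_right_of_imp fun hT : #T ≤ j => hT.trans hj]
  exact isLayerBasis_standardFamily_Ioc (by omega)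

theorem exists_isLayeredBasis_standardFamily_Ioc {k c n a : ℕ} (hkn : 3 * k + c ≤ n + 1)
    (hak : a ≤ k + c) :
    ∃ S ⊆ (Ioc a n).powerset, IsLayeredBasis k S (standardFamily c (Ioc a n)) := by
  rcases k.eq_zero_or_pos with rfl | hk
  · refine ⟨{∅}, by simp, by simp, fun j hj => ?_⟩
    obtain rfl := Nat.le_zero.1 hj
    exact .zero (mem_singleton_self _) empty_mem_standardFamily
  rcases hak.eq_or_lt with rfl | hlt
  · exact ⟨_, (filter_subset _ _).trans (filter_subset _ _),
      isLayeredBasis_standardFamily_Ioc_add hkn⟩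
  have Ioc_eq : Ioc a n = insert (a + 1) (Ioc (a + 1) n) :=
    (insert_Ioc_add_one_left_eq_Ioc (by omega)).symm
  obtain ⟨S₀, hS₀, h₀⟩ := exists_isLayeredBasis_standardFamily_Ioc hkn (a := a + 1) hlt
  by_cases hac : a + 1 < c + 2
  · rw [Ioc_eq, standardFamily_insert_of_lt hac]
    exact ⟨S₀, hS₀.trans (powerset_mono.2 (subset_insert _ _)), h₀⟩
  obtain ⟨k, rfl⟩ : ∃ k', k = k' + 1 := ⟨k - 1, by omega⟩
  obtain ⟨S₁, hS₁, h₁⟩ := exists_isLayeredBasis_standardFamily_Ioc (k := k) (c := c + 2) (n := n)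
    (a := a + 1) (by omega) (by omega)
  have notMem (T : Finset ℕ) (hT : T ∈ (Ioc (a + 1) n).powerset) : a + 1 ∉ T := fun haT =>
    left_notMem_Ioc (mem_powerset.1 hT haT)
  have hlt (x : ℕ) (hx : x ∈ Ioc (a + 1) n) : a + 1 < x := (mem_Ioc.1 hx).1
  rw [Ioc_eq, powerset_insert]
  refine ⟨_, union_subset_union hS₀ (image_subset_image hS₁),
    .union_image_insert (fun T hT => notMem T (hS₀ hT)) (fun T hT => notMem T (hS₁ hT)) ?_ ?_⟩
  · rwa [nonMemberSubfamily_standardFamily_insert left_notMem_Ioc]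
  · rwa [memberSubfamily_standardFamily_insert_of_forall_gt hlt (by omega)]
termination_by n - a

end ShiftedStandard

theorem C_natCast (n s : ℕ) : C n s = n.choose s := by
  rcases le_or_gt s n with h | h
  · simp [C, h]
  · simp [C, h.not_ge, Nat.choose_eq_zero_of_lt h]

theorem C_of_neg {y : ℤ} (hy : y < 0) (x : ℤ) : C x y = 0 :=
  if_neg fun h => hy.not_ge h.1

section Counting

variable {α : Type*} [DecidableEq α] {A B : Finset α}

theorem card_filter_Icc_card_eq_add (hAB : A ⊆ B) (t : ℕ) :
    #{U ∈ Icc A B | #U = #A + t} = (#B - #A).choose t := by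
  rw [← card_sdiff_of_subset hAB, ← card_powersetCard]
  refine card_nbij' (· \ A) (A ∪ ·) (fun U hU => ?_) (fun U hU => ?_) (fun U hU => ?_)
    fun U hU => ?_ <;>
    simp only [coe_filter, mem_Icc, Set.mem_ofPred_eq, mem_coe, mem_powersetCard] at hU ⊢
  · exact ⟨sdiff_subset_sdiff hU.1.2 le_rfl, by rw [card_sdiff_of_subset hU.1.1]; omega⟩
  · have hAU : Disjoint A U := disjoint_sdiff.mono_right hU.1
    exact ⟨⟨subset_union_left, union_subset hAB (hU.1.trans sdiff_subset)⟩,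
      by rw [card_union_of_disjoint hAU, hU.2]⟩
  · exact union_sdiff_of_subset hU.1.1
  · exact union_sdiff_cancel_left (disjoint_sdiff.mono_right hU.1)

theorem card_filter_Icc_card_eq (hAB : A ⊆ B) (p : ℤ) :
    (#{U ∈ Icc A B | (#U : ℤ) = p} : ℤ) = C (#B - #A) (p - #A) := by
  rcases lt_or_ge p #A with hp | hp
  · rw [C_of_neg (by omega), Nat.cast_eq_zero, card_eq_zero, filter_eq_empty_iff]
    intro U hU
    have := card_le_card (mem_Icc.1 hU).1
    omega
  · obtain ⟨t, rfl⟩ : ∃ t : ℕ, p = #A + t := ⟨(p - #A).toNat, by omega⟩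
    rw [add_sub_cancel_left, ← Nat.cast_sub (card_le_card hAB), C_natCast,
      ← card_filter_Icc_card_eq_add hAB]
    norm_cast

theorem union_inter_eq_and_union_sdiff_eq {V b x y : Finset α} (hx : x ⊆ b) (hy : y ⊆ V \ b) :
    (x ∪ y) ∩ b = x ∧ (x ∪ y) \ b = y := by
  grind

theorem card_filter_Icc_card_inter_eq_card_sdiff_eq {T V b : Finset α} (hT : T ⊆ V) (hb : b ⊆ V)
    (p q : ℤ) :
    (#{U ∈ Icc T V | (#(U ∩ b) : ℤ) = p ∧ (#(U \ b) : ℤ) = q} : ℤ) =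
      C (#b - #(T ∩ b)) (p - #(T ∩ b)) * C (#V - #b - #T + #(T ∩ b)) (q - #T + #(T ∩ b)) := by
  have card_eq : #{U ∈ Icc T V | (#(U ∩ b) : ℤ) = p ∧ (#(U \ b) : ℤ) = q} =
      #({U ∈ Icc (T ∩ b) b | (#U : ℤ) = p} ×ˢ {U ∈ Icc (T \ b) (V \ b) | (#U : ℤ) = q}) := by
    refine card_nbij' (fun U => (U ∩ b, U \ b)) (fun U => U.1 ∪ U.2) ?_ ?_ ?_ ?_
    · simp only [Set.MapsTo, mem_coe, mem_filter, mem_Icc, mem_product]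
      exact fun U hU => ⟨⟨⟨inter_subset_inter_right hU.1.1, inter_subset_right⟩, hU.2.1⟩,
        ⟨sdiff_subset_sdiff hU.1.1 le_rfl, sdiff_subset_sdiff hU.1.2 le_rfl⟩, hU.2.2⟩
    · simp only [Set.MapsTo, mem_coe, mem_filter, mem_Icc, mem_product, Prod.forall]
      rintro x y ⟨⟨⟨hTx, hxb⟩, hx⟩, ⟨hTy, hyV⟩, hy⟩
      obtain ⟨hinter, hsdiff⟩ := union_inter_eq_and_union_sdiff_eq hxb hyV
      rw [hinter, hsdiff]
      refine ⟨⟨?_, union_subset (hxb.trans hb) (hyV.trans sdiff_subset)⟩, hx, hy⟩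
      exact (sup_inf_sdiff T b).symm.trans_subset (union_subset_union hTx hTy)
    · exact fun U _ => sup_inf_sdiff U b
    · simp only [Set.RightInvOn, Set.LeftInvOn, mem_coe, mem_filter, mem_Icc, mem_product,
        Prod.forall]
      rintro x y ⟨⟨⟨-, hxb⟩, -⟩, ⟨-, hyV⟩, -⟩
      obtain ⟨hinter, hsdiff⟩ := union_inter_eq_and_union_sdiff_eq hxb hyV
      rw [hinter, hsdiff]
  rw [card_eq, card_product, Nat.cast_mul, card_filter_Icc_card_eq inter_subset_right,
    card_filter_Icc_card_eq (sdiff_subset_sdiff hT le_rfl)]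
  have h₁ := card_sdiff_add_card_eq_card hb
  have h₂ := card_inter_add_card_sdiff T b
  congr 2 <;> omega

end Counting

theorem sum_choose_mul_sum_neg_one_pow_choose (g : ℕ → ℤ) (m : ℕ) :
    ∑ i ∈ range (m + 1), (m.choose i : ℤ) *
      ∑ v ∈ range (i + 1), (-1 : ℤ) ^ (i + v) * i.choose v * g v = g m := by
  have newton := shift_eq_sum_fwdDiff_iter 1 g m 0
  simp only [smul_eq_mul, mul_one, zero_add] at newton
  rw [newton]
  refine sum_congr rfl fun i _ => ?_
  rw [fwdDiff_iter_eq_sum_shift, nsmul_eq_mul]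
  refine congrArg _ (sum_congr rfl fun v hv => ?_)
  obtain ⟨d, rfl⟩ := Nat.exists_eq_add_of_le (mem_range_succ_iff.1 hv)
  simp [pow_add, mul_right_comm, ← mul_pow]

/-- The coefficient `c_v(j)` of the definition of `f`. It counts the `kc`-sets that contain a given
set of size `j` and meet a given `kr`-set, `v` of whose elements are prescribed, in `ℓ` elements. -/
noncomputable def extensionCount (n kr kc ℓ v j : ℕ) : ℤ :=
  C (kr - v) (ℓ - v) * C (n - kr - j + v) (kc - ℓ - j + v)

theorem card_filter_ksubsets_inter_eq (n kr kc ℓ : ℕ) {T b : Finset ℕ} (hT : T ⊆ Icc 1 n)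
    (hb : b ∈ ksubsets n kr) :
    (#{U ∈ ksubsets n kc | T ⊆ U ∧ #(b ∩ U) = ℓ} : ℤ) =
      extensionCount n kr kc ℓ #(T ∩ b) #T := by
  obtain ⟨hbn, hbk⟩ := mem_filter.1 hb
  have filter_eq : {U ∈ ksubsets n kc | T ⊆ U ∧ #(b ∩ U) = ℓ} =
      {U ∈ Icc T (Icc 1 n) | (#(U ∩ b) : ℤ) = ℓ ∧ (#(U \ b) : ℤ) = kc - ℓ} := by
    ext U
    have := card_inter_add_card_sdiff U b
    simp only [ksubsets, mem_filter, mem_powerset, mem_Icc, inter_comm b]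
    grind
  rw [filter_eq, card_filter_Icc_card_inter_eq_card_sdiff_eq hT (mem_powerset.1 hbn), hbk,
    Nat.card_Icc, Nat.add_sub_cancel, extensionCount]

theorem card_filter_ksubsets_eq_sum_f (n kr kc ℓ : ℕ) {T b : Finset ℕ} (hT : T ⊆ Icc 1 n)
    (hb : b ∈ ksubsets n kr) :
    (#{U ∈ ksubsets n kc | T ⊆ U ∧ #(b ∩ U) = ℓ} : ℤ) =
      ∑ U ∈ (T ∩ b).powerset, f n kr kc ℓ #U #T := by
  rw [card_filter_ksubsets_inter_eq n kr kc ℓ hT hb,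
    sum_powerset_apply_card (fun i => f n kr kc ℓ i #T)]
  simp only [nsmul_eq_mul]
  exact (sum_choose_mul_sum_neg_one_pow_choose (extensionCount n kr kc ℓ · #T) _).symm

section Multiplicity

theorem card_slice_eq_sub {α : Type*} {𝒜 : Finset (Finset α)} {G : ℤ → ℤ} (hG : G (-1) = 0) {j : ℕ}
    (h : ∀ i ≤ j, (#{T ∈ 𝒜 | #T ≤ i} : ℤ) = G i) : (#(𝒜 # j) : ℤ) = G j - G (j - 1) := by
  rcases j with _ | j
  · have slice_zero : 𝒜 # 0 = {T ∈ 𝒜 | #T ≤ 0} := by simp only [slice, Nat.le_zero]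
    rw [slice_zero, h 0 le_rfl, Nat.cast_zero, zero_sub, hG, sub_zero]
  · have card_succ : #{T ∈ 𝒜 | #T ≤ j + 1} = #{T ∈ 𝒜 | #T ≤ j} + #(𝒜 # (j + 1)) := by
      rw [slice, ← card_union_of_disjoint, ← filter_or]
      · simp only [Nat.le_succ_iff]
      · exact disjoint_filter.2 fun T _ hle heq => by omega
    rw [← h _ le_rfl, card_succ, Nat.cast_add, h j j.le_succ, Nat.cast_succ, add_sub_cancel_right,
      add_sub_cancel_left]

variable {k n s : ℕ} {S : Finset (Finset ℕ)}

theorem powerset_Ioc_zero_slice (n k : ℕ) : (Ioc 0 n).powerset # k = ksubsets n k := rfl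

theorem card_ksubsets (n k : ℕ) : #(ksubsets n k) = n.choose k := by
  have : ksubsets n k = powersetCard k (Icc 1 n) := by
    ext T
    rw [ksubsets, mem_filter, mem_powerset, mem_powersetCard]
  rw [this, card_powersetCard, Nat.card_Icc, Nat.add_sub_cancel]

theorem card_slice_standardFamily_Ioc_zero (hkn : 2 * k ≤ n + 1) :
    (#((standardFamily 0 (Ioc 0 n)) # k) : ℤ) = C n k - C n (k - 1) := by
  refine card_slice_eq_sub (C_of_neg (by decide) _) fun j hj => ?_
  rw [(isLayerBasis_standardFamily_Ioc (by omega)).card_eq, powerset_Ioc_zero_slice, card_ksubsets,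
    C_natCast]

theorem IsLayeredBasis.card_slice_eq_msMult (hS : IsLayeredBasis k S (standardFamily 0 (Ioc 0 n)))
    (hkn : 2 * k ≤ n + 1) (hsk : s ≤ k) : (#(S # s) : ℤ) = msMult n s := by
  rw [card_slice_eq_sub (G := fun y => C n y - C n (y - 1)), msMult]
  · ring_nf
  · simp [C_of_neg]
  · intro j hj
    rw [(hS.isLayerBasis j (hj.trans hsk)).card_eq, card_slice_standardFamily_Ioc_zero (by omega)]

end Multiplicity

section Intertwining

theorem sub_smul_one_mul_eq_mul_sub_smul_one {R m n : Type*} [CommRing R] [Fintype m] [Fintype n]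
    [DecidableEq m] [DecidableEq n] {A : Matrix m m R} {B : Matrix n n R} {P : Matrix m n R}
    (h : A * P = P * B) (c : R) : (A - c • 1) * P = P * (B - c • 1) := by
  rw [Matrix.sub_mul, Matrix.mul_sub, h, Matrix.smul_mul, Matrix.mul_smul, Matrix.one_mul,
    Matrix.mul_one]

theorem isLowerSet_filter_card_le {α : Type*} {𝒜 : Finset (Finset α)}
    (h𝒜 : IsLowerSet (𝒜 : Set (Finset α))) (k : ℕ) :
    IsLowerSet (({T ∈ 𝒜 | #T ≤ k} : Finset (Finset α)) : Set (Finset α)) :=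
  fun T U hUT hT => by
    rw [mem_coe, mem_filter] at hT ⊢
    exact ⟨h𝒜 hUT hT.1, (card_le_card hUT).trans hT.2⟩

variable {α : Type*} [DecidableEq α]

/-- The inclusion matrix of `𝒯` with itself, the entry at `U ⊆ T` being weighted by a function `φ`
of the sizes of `U` and `T`. -/
def gradedInclusionMatrix (𝒯 : Finset (Finset α)) (φ : ℕ → ℕ → ℤ) : Matrix 𝒯 𝒯 ℤ :=
  of fun U T => if (U : Finset α) ⊆ T then φ #(U : Finset α) #(T : Finset α) else 0

theorem interMat_mul_inclusionMatrix {𝒯 : Finset (Finset ℕ)} (n kr kc ℓ : ℕ)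
    (h𝒯 : IsLowerSet (𝒯 : Set (Finset ℕ))) (h𝒯n : ∀ T ∈ 𝒯, T ⊆ Icc 1 n) :
    interMat n kr kc ℓ * inclusionMatrix 𝒯 (ksubsets n kc) =
      inclusionMatrix 𝒯 (ksubsets n kr) * gradedInclusionMatrix 𝒯 (f n kr kc ℓ) := by
  ext b T
  simp only [mul_apply, interMat, inclusionMatrix, gradedInclusionMatrix, of_apply, ← ite_and,
    ite_mul, mul_ite, mul_one, mul_zero, one_mul, zero_mul]
  rw [sum_coe_sort (ksubsets n kc) fun U =>
      if (T : Finset ℕ) ⊆ U ∧ #(b ∩ U) = ℓ then (1 : ℤ) else 0,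
    sum_coe_sort 𝒯 fun U =>
      if U ⊆ (T : Finset ℕ) ∧ U ⊆ b then f n kr kc ℓ #U #(T : Finset ℕ) else 0,
    ← sum_filter, ← sum_filter, sum_const, nsmul_one,
    card_filter_ksubsets_eq_sum_f n kr kc ℓ (h𝒯n T T.2) b.2]
  refine sum_congr ?_ fun _ _ => rfl
  ext U
  simp only [mem_powerset, mem_filter, subset_inter_iff]
  exact ⟨fun hU => ⟨h𝒯 hU.1 T.2, hU⟩, And.right⟩

/-- The matrix that block diagonalizes the graded inclusion matrices: its row `(R, t)` is the
indicator of the sets in `𝒯` that contain `R` and have exactly `t` further elements. -/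
def layerMatrix (k : ℕ) (S 𝒯 : Finset (Finset α)) :
    Matrix (Σ R : S, Fin (k - #(R : Finset α) + 1)) 𝒯 ℤ :=
  of fun p T => if (p.1 : Finset α) ⊆ T ∧ #(T : Finset α) = #(p.1 : Finset α) + p.2 then 1 else 0

/-- The action of `gradedInclusionMatrix` on the indicators of the supersets of size `s + t` of a
fixed set of size `s`, where `s + t ≤ k`. Up to the shift by `lam` these are the matrices `Ms`. -/
def levelMatrix (k s : ℕ) (φ : ℕ → ℕ → ℤ) : Matrix (Fin (k - s + 1)) (Fin (k - s + 1)) ℤ :=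
  of fun t u => ((u : ℕ).choose t : ℤ) * φ (s + t) (s + u)

theorem Ms_eq_levelMatrix_sub_smul_one (n k ℓ : ℕ) (lam : ℤ) (s : ℕ) :
    Ms n k ℓ lam s = levelMatrix k s (f n k k ℓ) - lam • 1 := by
  ext t u
  rw [smul_one_eq_diagonal]
  rcases eq_or_ne t u with rfl | htu <;> simp [levelMatrix, Ms, neg_add_eq_sub, *]

variable {k : ℕ} {S 𝒯 𝒜 : Finset (Finset α)}

theorem sum_fin_ite_eq_add {M : Type*} [AddCommMonoid M] {a b k : ℕ} (hab : a ≤ b) (hbk : b ≤ k)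
    (g : ℕ → M) : ∑ t : Fin (k - a + 1), (if b = a + t then g t else 0) = g (b - a) := by
  rw [Fin.sum_univ_eq_sum_range (fun t => if b = a + t then g t else 0),
    sum_eq_single_of_mem (b - a) (mem_range.2 (by omega)) fun t _ ht => if_neg (by omega),
    if_pos (by omega)]

theorem blockDiagonal'_mul_apply {R ι κ : Type*} [Semiring R] [Fintype ι] [DecidableEq ι]
    {m n : ι → Type*} [∀ i, Fintype (n i)] (M : ∀ i, Matrix (m i) (n i) R)
    (N : Matrix (Σ i, n i) κ R) (i : ι) (j : m i) (c : κ) :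
    (blockDiagonal' M * N) ⟨i, j⟩ c = ∑ r, M i j r * N ⟨i, r⟩ c := by
  rw [mul_apply, Fintype.sum_sigma]
  refine (sum_eq_single i (fun i' _ hi' => ?_) (by simp)).trans ?_
  · exact sum_eq_zero fun r _ => by rw [blockDiagonal'_apply_ne M _ _ hi'.symm, zero_mul]
  · simp only [blockDiagonal'_apply_eq]

theorem blockDiagonal'_levelMatrix_mul_layerMatrix (h𝒯 : IsLowerSet (𝒯 : Set (Finset α)))
    (h𝒯k : ∀ T ∈ 𝒯, #T ≤ k) (φ : ℕ → ℕ → ℤ) :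
    blockDiagonal' (fun R : S => levelMatrix k #(R : Finset α) φ) * layerMatrix k S 𝒯 =
      layerMatrix k S 𝒯 * gradedInclusionMatrix 𝒯 φ := by
  ext ⟨R, t⟩ T
  trans if (R : Finset α) ⊆ T then
      ((#(T : Finset α) - #(R : Finset α)).choose t : ℤ) * φ (#(R : Finset α) + t) #(T : Finset α)
    else 0
  · simp only [blockDiagonal'_mul_apply, levelMatrix, layerMatrix, of_apply, mul_ite, mul_one,
      mul_zero, ite_and]
    rw [sum_ite_irrel, sum_const_zero]
    refine if_ctx_congr Iff.rfl (fun hRT => ?_) fun _ => rfl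
    rw [sum_fin_ite_eq_add (card_le_card hRT) (h𝒯k T T.2) fun u =>
      (u.choose t : ℤ) * φ (#(R : Finset α) + t) (#(R : Finset α) + u),
      Nat.add_sub_cancel' (card_le_card hRT)]
  · have filter_eq : {U ∈ 𝒯 | ((R : Finset α) ⊆ U ∧ #U = #(R : Finset α) + t) ∧ U ⊆ T} =
        {U ∈ Icc (R : Finset α) T | #U = #(R : Finset α) + t} := by
      ext U
      simp only [mem_filter, mem_Icc]
      exact ⟨fun h => ⟨⟨h.2.1.1, h.2.2⟩, h.2.1.2⟩, fun h => ⟨h𝒯 h.1.2 T.2, ⟨h.1.1, h.2⟩, h.1.2⟩⟩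
    simp only [mul_apply, layerMatrix, gradedInclusionMatrix, of_apply, ite_mul, one_mul, zero_mul,
      ← ite_and]
    rw [sum_coe_sort 𝒯 fun U => if ((R : Finset α) ⊆ U ∧ #U = #(R : Finset α) + t) ∧
        U ⊆ (T : Finset α) then φ #U #(T : Finset α) else 0, ← sum_filter, filter_eq,
      sum_congr rfl fun U hU => by rw [(mem_filter.1 hU).2], sum_const, nsmul_eq_mul]
    split_ifs with hRT
    · rw [card_filter_Icc_card_eq_add hRT]
    · rw [Icc_eq_empty hRT, filter_empty, card_empty, Nat.cast_zero, zero_mul]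

theorem IsLayeredBasis.card_sigma_eq (h : IsLayeredBasis k S 𝒜) :
    Fintype.card (Σ R : S, Fin (k - #(R : Finset α) + 1)) =
      Fintype.card ({T ∈ 𝒜 | #T ≤ k} : Finset (Finset α)) := by
  have card_filter_range (R : Finset α) (hR : R ∈ S) :
      #{j ∈ range (k + 1) | #R ≤ j} = k - #R + 1 := by
    have : {j ∈ range (k + 1) | #R ≤ j} = Icc #R k := by
      ext j
      simp only [mem_filter, mem_range, mem_Icc]
      omega
    rw [this, Nat.card_Icc, Nat.sub_add_comm (h.card_le R hR)]
  calc Fintype.card (Σ R : S, Fin (k - #(R : Finset α) + 1))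
      = ∑ R ∈ S, #{j ∈ range (k + 1) | #R ≤ j} := by
        simp only [Fintype.card_sigma, Fintype.card_fin]
        rw [sum_coe_sort S fun R => k - #R + 1]
        exact (sum_congr rfl card_filter_range).symm
    _ = ∑ j ∈ range (k + 1), #{R ∈ S | #R ≤ j} :=
        sum_card_bipartiteAbove_eq_sum_card_bipartiteBelow _
    _ = ∑ j ∈ range (k + 1), #(𝒜 # j) :=
        sum_congr rfl fun j hj => (h.isLayerBasis j (mem_range_succ_iff.1 hj)).card_eq
    _ = Fintype.card ({T ∈ 𝒜 | #T ≤ k} : Finset (Finset α)) := by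
        rw [Fintype.card_coe, card_eq_sum_card_fiberwise (f := card) (t := range (k + 1))]
        · refine sum_congr rfl fun j hj => ?_
          refine congrArg _ (ext fun T => ?_)
          simp only [mem_slice, mem_filter, and_assoc, and_congr_right_iff]
          exact fun _ => (and_iff_right_of_imp fun hT => hT.trans_le (mem_range_succ_iff.1 hj)).symm
        · exact fun T hT => mem_range_succ_iff.2 (mem_filter.1 hT).2

theorem IsLayeredBasis.vecMul_layerMatrix_surjective (h : IsLayeredBasis k S 𝒜) :
    Function.Surjective (layerMatrix k S {T ∈ 𝒜 | #T ≤ k}).vecMul := by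
  intro y
  choose! x hx using fun (j : ℕ) (hj : j ≤ k) => (h.isLayerBasis j hj).exists_sum_eq fun T =>
    if hT : T ∈ ({T ∈ 𝒜 | #T ≤ k} : Finset (Finset α)) then y ⟨T, hT⟩ else 0
  refine ⟨fun p => x (#(p.1 : Finset α) + p.2) p.1, funext fun ⟨T, hT⟩ => ?_⟩
  have hTk := (mem_filter.1 hT).2
  simp only [vecMul, dotProduct, Fintype.sum_sigma, layerMatrix, of_apply, mul_ite, mul_one,
    mul_zero, ite_and]
  have sum_layers (R : Finset α) : ∑ t : Fin (k - #R + 1),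
      (if R ⊆ T then if #T = #R + t then x (#R + t) R else 0 else 0) =
        if #R ≤ #T ∧ R ⊆ T then x #T R else 0 := by
    rw [sum_ite_irrel, sum_const_zero]
    by_cases hRT : R ⊆ T
    · have hcard := card_le_card hRT
      rw [if_pos hRT, if_pos ⟨hcard, hRT⟩, sum_fin_ite_eq_add hcard hTk fun t => x (#R + t) R,
        Nat.add_sub_cancel' hcard]
    · rw [if_neg hRT, if_neg fun h => hRT h.2]
  rw [sum_coe_sort S fun R => ∑ t : Fin (k - #R + 1),
    if R ⊆ T then if #T = #R + t then x (#R + t) R else 0 else 0]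
  simp only [sum_layers]
  rw [← sum_filter, ← filter_filter, hx #T hTk T (mem_slice.2 ⟨(mem_filter.1 hT).1, rfl⟩),
    dif_pos hT]

theorem IsLayeredBasis.vecMul_layerMatrix_bijective (h : IsLayeredBasis k S 𝒜) :
    Function.Bijective (layerMatrix k S {T ∈ 𝒜 | #T ≤ k}).vecMul := by
  obtain ⟨N, hN⟩ := vecMul_surjective_iff_exists_left_inverse.1 h.vecMul_layerMatrix_surjective
  exact vecMul_bijective_of_mul_eq_one h.card_sigma_eq hN

end Intertwining

section SmithGroupDecomposition

/-- The Smith group of `A - lam I` in terms of the inclusions between sets of a family that indexes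
a basis of the row vectors. -/
noncomputable def smithGroupInterMatEquiv {n k : ℕ} {S : Finset (Finset ℕ)} (ℓ : ℕ) (lam : ℤ)
    (hSn : S ⊆ (Ioc 0 n).powerset) (hS : IsLowerSet (S : Set (Finset ℕ)))
    (hSk : IsLayerBasis k S (Ioc 0 n).powerset) :
    SmithGroup (interMat n k k ℓ - lam • (1 : Matrix ↥(ksubsets n k) ↥(ksubsets n k) ℤ)) ≃+
      SmithGroup (gradedInclusionMatrix {T ∈ S | #T ≤ k} (f n k k ℓ) - lam • 1) :=
  smithGroupEquivOfMulEqMul hSk.vecMul_bijective hSk.vecMul_bijective.surjective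
    (sub_smul_one_mul_eq_mul_sub_smul_one (interMat_mul_inclusionMatrix n k k ℓ
      (isLowerSet_filter_card_le hS k) fun _ hT => mem_powerset.1 (hSn (mem_filter.1 hT).1)) lam)

/-- The Smith group of a shifted graded inclusion matrix, split by a layered basis into the Smith
groups of the shifted level matrices `M s`. -/
noncomputable def smithGroupGradedInclusionMatrixEquiv {α : Type*} [DecidableEq α] {k : ℕ}
    {S 𝒜 : Finset (Finset α)} {φ : ℕ → ℕ → ℤ} {lam : ℤ}
    {M : ∀ s, Matrix (Fin (k - s + 1)) (Fin (k - s + 1)) ℤ}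
    (hM : ∀ s, M s = levelMatrix k s φ - lam • 1) (h𝒜 : IsLowerSet (𝒜 : Set (Finset α)))
    (hS : IsLayeredBasis k S 𝒜) :
    SmithGroup (gradedInclusionMatrix {T ∈ 𝒜 | #T ≤ k} φ - lam • 1) ≃+
      ∀ R : S, SmithGroup (M #(R : Finset α)) :=
  have intertwining : blockDiagonal' (fun R : S => M #(R : Finset α)) *
      layerMatrix k S {T ∈ 𝒜 | #T ≤ k} = layerMatrix k S {T ∈ 𝒜 | #T ≤ k} *
        (gradedInclusionMatrix {T ∈ 𝒜 | #T ≤ k} φ - lam • 1) := by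
    rw [← sub_smul_one_mul_eq_mul_sub_smul_one (blockDiagonal'_levelMatrix_mul_layerMatrix
        (isLowerSet_filter_card_le h𝒜 k) (fun _ hT => (mem_filter.1 hT).2) φ) lam,
      ← blockDiagonal'_one, ← blockDiagonal'_smul, ← blockDiagonal'_sub]
    exact congrArg (blockDiagonal' · * _) (funext fun R => hM _)
  (smithGroupEquivOfMulEqMul hS.vecMul_layerMatrix_bijective
    hS.vecMul_layerMatrix_bijective.surjective intertwining).symm.trans
    (smithGroupBlockDiagonalEquiv _)

end SmithGroupDecomposition

/-- Regroups a product over the members of `S` according to their sizes, `m s` being the number of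
members of size `s`. -/
noncomputable def piCardAddEquiv {α : Type*} {k : ℕ} {S : Finset (Finset α)} {m : Fin (k + 1) → ℕ}
    (hSk : ∀ R ∈ S, #R ≤ k) (hm : ∀ s : Fin (k + 1), #(S # s) = m s) (G : ℕ → Type*)
    [∀ s, AddCommGroup (G s)] :
    (∀ R : S, G #(R : Finset α)) ≃+ ∀ s : Fin (k + 1), Fin (m s) → G s :=
  let φ (R : S) : Fin (k + 1) := ⟨#(R : Finset α), Nat.lt_succ_of_le (hSk R R.2)⟩
  have card_fibre (s : Fin (k + 1)) : Fintype.card {R // φ R = s} = m s := by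
    simp only [φ, Fin.ext_iff]
    rw [Fintype.card_subtype, card_filter, sum_coe_sort S fun R => if #R = s then 1 else 0,
      ← card_filter, ← hm, slice]
  (piFiberAddEquiv φ fun s => G s).trans <| .piCongrRight fun s =>
    .arrowCongr (Fintype.equivFinOfCardEq (card_fibre s)) (.refl _)

/-- `S(A − λI) ≅ ⊕_{s=0}^{k} S(M_s)^{m_s}`. -/
theorem statement10 (n k ℓ : ℕ) (hlk : ℓ ≤ k) (hn : 3 * k ≤ n + 1) (lam : ℤ) :
    Nonempty (SmithGroup (interMat n k k ℓ - lam • (1 : Matrix ↥(ksubsets n k) ↥(ksubsets n k) ℤ)) ≃+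
      ((s : Fin (k + 1)) → Fin (msMult n s).toNat → SmithGroup (Ms n k ℓ lam s))) := by
  obtain ⟨S, -, hS⟩ := exists_isLayeredBasis_standardFamily_Ioc (c := 0) (a := 0) hn (Nat.zero_le _)
  have card_slice (s : Fin (k + 1)) : #(S # s) = (msMult n s).toNat := by
    rw [← hS.card_slice_eq_msMult (by omega) (Nat.le_of_lt_succ s.2), Int.toNat_natCast]
  exact ⟨(smithGroupInterMatEquiv ℓ lam (filter_subset _ _) isLowerSet_standardFamily
      (isLayerBasis_standardFamily_Ioc (by omega))).trans <|
    (smithGroupGradedInclusionMatrixEquiv (Ms_eq_levelMatrix_sub_smul_one n k ℓ lam)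
      isLowerSet_standardFamily hS).trans <|
    piCardAddEquiv hS.card_le card_slice fun s => SmithGroup (Ms n k ℓ lam s)⟩
end

section
/- Let n ≥ 5 be an integer and let L be the Laplacian matrix of the Johnson graph J(n,2): the square integer matrix indexed by the 2-element subsets of {1,…,n} with L(A,A) = 2(n−2), L(A,B) = −1 when |A ∩ B| = 1, and L(A,B) = 0 when A ∩ B = ∅. Then there is an isomorphism of abelian groups S(L) ≅ ℤ ⊕ (ℤ/2(n−1)ℤ)^{C(n,2)−2n+1} ⊕ (ℤ/2n(n−1)ℤ)^{n−2} ⊕ T, where T = ℤ/4ℤ if n is odd and T = ℤ/2ℤ ⊕ ℤ/2ℤ if n is even. -/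
open scoped Classical

/-- The Laplacian of the Johnson graph `J(n,2)`: diagonal entry `2(n−2)`, entry `−1`
between distinct 2-subsets meeting in one point, `0` between disjoint 2-subsets. -/
noncomputable def johnsonLap (n : ℕ) : Matrix ↥(ksubsets n 2) ↥(ksubsets n 2) ℤ :=
  Matrix.of fun A B =>
    if A = B then 2 * ((n : ℤ) - 2)
    else if ((A : Finset ℕ) ∩ (B : Finset ℕ)).card = 1 then -1
    else 0

/-!
Let `N` be the vertex-edge incidence matrix of `Kₙ`, so that `L = 2(n - 1) - NᵀN`. A homomorphism
from `S(L)` to an abelian group `X` is an edge weighting of `Kₙ` with values in `X` that is killed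
by `L`. Write the weight of `{i, j}` as `t + c i + c j + k {i, j}`, made unique by requiring that
`c 1 = 0`, that `k` vanishes on the edges at `1`, and that `k {2, 3} = 0`. The edges of the triangle
`{1, 2, 3}` then force `2 ∑ c = 0`, and the whole system becomes

`2 ∑ c = 0`, `2(n - 1) k = 0`, `∑ⱼ k {i, j} = n c i` for all `i`.

The vertex equations express the edges at `2` through the others. The equations `k {2, 3} = 0` and
the definition of `W` below do the same for `k {3, 4}` and `k {4, 5}`. What remains is free except
for the orders `2(n - 1)` of the other `k e` and `2n(n - 1)` of the `c i` with `3 ≤ i`, and the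
relations `2 C = 0`, `2 W = n C` between `C = ∑ c` and the excess
`W = ∑ k e - n ∑ c i`, where both sums run over `{3, …, n}`. The parity of `n` decides whether `C`
and `W` generate `ℤ/4` or `ℤ/2 ⊕ ℤ/2`.
-/

namespace SmithGroup

variable {ρ γ X : Type*} [DecidableEq γ] [AddCommGroup X]

/-- The class in the Smith group of the standard basis vector at the column `j`. -/
def gen (M : Matrix ρ γ ℤ) (j : γ) : SmithGroup M :=
  Submodule.Quotient.mk (Pi.single j 1)

theorem sum_smul_gen [Fintype γ] (M : Matrix ρ γ ℤ) (r : ρ) : ∑ j, M r j • gen M j = 0 := by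
  have row_mem : M r ∈ Submodule.span ℤ (Set.range fun r : ρ => M r) :=
    Submodule.subset_span ⟨r, rfl⟩
  rw [← (Submodule.Quotient.mk_eq_zero _).2 row_mem, ← Submodule.mkQ_apply]
  conv_rhs => rw [pi_eq_sum_univ' (M r), map_sum]
  exact Finset.sum_congr rfl fun j _ => (map_smul (Submodule.mkQ _) (M r j) _).symm

/-- The homomorphism out of a Smith group given by a family in the codomain satisfying the
relations encoded by the rows. -/
def lift [Fintype γ] {M : Matrix ρ γ ℤ} (x : γ → X) (hx : ∀ r, ∑ j, M r j • x j = 0) :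
    SmithGroup M →+ X :=
  ((Submodule.span ℤ (Set.range fun r : ρ => M r)).liftQ (Fintype.linearCombination ℤ x) <|
    Submodule.span_le.2 <| by
      rintro _ ⟨r, rfl⟩
      exact hx r).toAddMonoidHom

@[simp]
theorem lift_gen [Fintype γ] {M : Matrix ρ γ ℤ} (x : γ → X)
    (hx : ∀ r, ∑ j, M r j • x j = 0) (j : γ) : lift x hx (gen M j) = x j := by
  change Fintype.linearCombination ℤ x (Pi.single j 1) = x j
  rw [Fintype.linearCombination_apply_single, one_smul]

theorem hom_ext [Finite γ] {M : Matrix ρ γ ℤ} {f g : SmithGroup M →+ X}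
    (h : ∀ j, f (gen M j) = g (gen M j)) : f = g := by
  suffices f.comp (Submodule.mkQ _).toAddMonoidHom = g.comp (Submodule.mkQ _).toAddMonoidHom from
    DFunLike.ext _ _ fun v => by
      obtain ⟨v, rfl⟩ := Submodule.Quotient.mk_surjective _ v
      exact DFunLike.congr_fun this v
  refine AddMonoidHom.functions_ext' _ _ _ fun j => ?_
  ext
  exact h j

end SmithGroup

section VertexSums

variable {α M : Type*} [DecidableEq α]

theorem pair_mem_powersetCard_two {S : Finset α} {a b : α} (ha : a ∈ S) (hb : b ∈ S)
    (hab : a ≠ b) : {a, b} ∈ S.powersetCard 2 :=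
  Finset.mem_powersetCard.2 ⟨Finset.insert_subset ha (Finset.singleton_subset_iff.2 hb),
    Finset.card_pair hab⟩

theorem forall_mem_powersetCard_two {S : Finset α} {P : Finset α → Prop} :
    (∀ e ∈ S.powersetCard 2, P e) ↔ ∀ a ∈ S, ∀ b ∈ S, a ≠ b → P {a, b} := by
  refine ⟨fun h a ha b hb hab => h _ (pair_mem_powersetCard_two ha hb hab), fun h e he => ?_⟩
  obtain ⟨heS, hcard⟩ := Finset.mem_powersetCard.1 he
  obtain ⟨a, b, hab, rfl⟩ := Finset.card_eq_two.1 hcard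
  exact h a (heS (by simp)) b (heS (by simp)) hab

theorem forall_mem_powersetCard_two_insert {S : Finset α} {p : α} (hp : p ∉ S)
    {P : Finset α → Prop} :
    (∀ e ∈ (insert p S).powersetCard 2, P e) ↔
      (∀ j ∈ S, P {p, j}) ∧ ∀ e ∈ S.powersetCard 2, P e := by
  rw [Finset.powersetCard_succ_insert hp, Finset.powersetCard_one, Finset.forall_mem_union,
    Finset.forall_mem_image, Finset.forall_mem_map, and_comm]
  rfl

variable [AddCommMonoid M]

theorem sum_powersetCard_two_insert {S : Finset α} {p : α} (hp : p ∉ S) (x : Finset α → M) :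
    ∑ e ∈ (insert p S).powersetCard 2, x e =
      ∑ j ∈ S, x {p, j} + ∑ e ∈ S.powersetCard 2, x e := by
  have star_notMem : ∀ e ∈ S.powersetCard 2, p ∉ e := fun e he hpe =>
    hp ((Finset.mem_powersetCard.1 he).1 hpe)
  rw [Finset.powersetCard_succ_insert hp, Finset.powersetCard_one, Finset.sum_union, add_comm,
    Finset.sum_image, Finset.sum_map]
  · rfl
  · simp only [Finset.coe_map, Set.InjOn, Set.mem_image]
    rintro _ ⟨i, hi, rfl⟩ _ ⟨j, hj, rfl⟩ hij
    have hpi : p ∉ ({i} : Finset α) := fun h => hp (Finset.mem_singleton.1 h ▸ hi)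
    have hpj : p ∉ ({j} : Finset α) := fun h => hp (Finset.mem_singleton.1 h ▸ hj)
    exact (Finset.erase_insert hpi).symm.trans ((congrArg (·.erase p) hij).trans
      (Finset.erase_insert hpj))
  · rw [Finset.disjoint_left]
    intro e he he'
    obtain ⟨j, -, rfl⟩ := Finset.mem_image.1 he'
    exact star_notMem _ he (Finset.mem_insert_self _ _)

/-- The weighted degree of the vertex `i` in the complete graph on `S`, for edge weights `x`. -/
def vertexSum (S : Finset α) (x : Finset α → M) (i : α) : M :=
  ∑ e ∈ S.powersetCard 2 with i ∈ e, x e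

theorem vertexSum_insert_self {S : Finset α} {p : α} (hp : p ∉ S) (x : Finset α → M) :
    vertexSum (insert p S) x p = ∑ j ∈ S, x {p, j} := by
  have rest_eq_zero : ∑ e ∈ S.powersetCard 2, (if p ∈ e then x e else 0) = 0 :=
    Finset.sum_eq_zero fun e he => if_neg fun hpe => hp ((Finset.mem_powersetCard.1 he).1 hpe)
  rw [vertexSum, Finset.sum_filter, sum_powersetCard_two_insert hp, rest_eq_zero, add_zero]
  exact Finset.sum_congr rfl fun j _ => if_pos (Finset.mem_insert_self p {j})

theorem vertexSum_insert_of_mem {S : Finset α} {p i : α} (hp : p ∉ S) (hi : i ∈ S)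
    (x : Finset α → M) : vertexSum (insert p S) x i = x {p, i} + vertexSum S x i := by
  have mem_star : ∀ j, i ∈ ({p, j} : Finset α) ↔ i = j := by
    have : i ≠ p := fun h => hp (h ▸ hi)
    simp [this]
  rw [vertexSum, vertexSum, Finset.sum_filter, Finset.sum_filter, sum_powersetCard_two_insert hp]
  simp only [mem_star, Finset.sum_ite_eq, hi, if_true]

theorem vertexSum_eq_sum_erase {S : Finset α} {i : α} (hi : i ∈ S) (x : Finset α → M) :
    vertexSum S x i = ∑ j ∈ S.erase i, x {i, j} := by
  conv_lhs => rw [← Finset.insert_erase hi]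
  exact vertexSum_insert_self (Finset.notMem_erase i S) x

theorem vertexSum_congr {S : Finset α} {x y : Finset α → M}
    (h : ∀ e ∈ S.powersetCard 2, x e = y e) (i : α) : vertexSum S x i = vertexSum S y i :=
  Finset.sum_congr rfl fun e he => h e (Finset.mem_filter.1 he).1

theorem sum_vertexSum_eq_sum_card_inter_nsmul (S T : Finset α) (x : Finset α → M) :
    ∑ i ∈ T, vertexSum S x i = ∑ e ∈ S.powersetCard 2, (T ∩ e).card • x e := by
  simp only [vertexSum, Finset.sum_filter]
  rw [Finset.sum_comm]
  refine Finset.sum_congr rfl fun e _ => ?_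
  rw [← Finset.sum_filter, Finset.filter_mem_eq_inter, Finset.sum_const]

theorem sum_vertexSum (S : Finset α) (x : Finset α → M) :
    ∑ i ∈ S, vertexSum S x i = 2 • ∑ e ∈ S.powersetCard 2, x e := by
  rw [sum_vertexSum_eq_sum_card_inter_nsmul, Finset.smul_sum]
  refine Finset.sum_congr rfl fun e he => ?_
  obtain ⟨heS, hcard⟩ := Finset.mem_powersetCard.1 he
  rw [Finset.inter_eq_right.2 heS, hcard]

end VertexSums

section EdgeWeights

variable {α X : Type*} [AddCommGroup X]

/-- The edge weighting with constant part `t`, vertex potential `c` and remainder `k`. -/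
def edgeWeight (t : X) (c : α → X) (k : Finset α → X) (e : Finset α) : X :=
  t + ∑ i ∈ e, c i + k e

theorem map_edgeWeight {Y : Type*} [AddCommGroup Y] (φ : X →+ Y) (t : X) (c : α → X)
    (k : Finset α → X) (e : Finset α) :
    φ (edgeWeight t c k e) = edgeWeight (φ t) (φ ∘ c) (φ ∘ k) e := by
  simp only [edgeWeight, map_add, map_sum, Function.comp_apply]

variable [DecidableEq α]

theorem exists_vertexSum_eq_and_sum_eq {S f g : Finset α} {p : α} (hf : f ∈ S.powersetCard 2)
    (hg : g ∈ S.powersetCard 2) (hpf : p ∈ f) (hpg : p ∉ g) (k : Finset α → X) (d s : X) :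
    ∃ A : Finset α → X, (∀ e, e ≠ f → e ≠ g → A e = k e) ∧ vertexSum S A p = d ∧
      ∑ e ∈ S.powersetCard 2, A e = s := by
  let v := d - vertexSum S k p
  let w := s - ∑ e ∈ S.powersetCard 2, k e - v
  refine ⟨k + Pi.single f v + Pi.single g w, fun e hef heg => ?_, ?_, ?_⟩
  · simp [hef, heg]
  · simp only [vertexSum, Pi.add_apply, Finset.sum_add_distrib, Finset.sum_pi_single',
      Finset.mem_filter, hf, hg, hpf, hpg, and_true, and_false, if_true, if_false, v]
    abel
  · simp only [Pi.add_apply, Finset.sum_add_distrib, Finset.sum_pi_single', hf, hg, if_true, w]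
    abel

theorem forall_mem_of_vertexSum_mem_of_sum_mem {S f g : Finset α} {p : α} (H : AddSubgroup X)
    (hf : f ∈ S.powersetCard 2) (hg : g ∈ S.powersetCard 2) (hpf : p ∈ f) (hpg : p ∉ g)
    {k : Finset α → X} (hk : ∀ e ∈ S.powersetCard 2, e ≠ f → e ≠ g → k e ∈ H)
    (hvertex : vertexSum S k p ∈ H) (hsum : ∑ e ∈ S.powersetCard 2, k e ∈ H) :
    ∀ e ∈ S.powersetCard 2, k e ∈ H := by
  have mem_f : k f ∈ H := by
    rw [vertexSum, ← Finset.add_sum_erase _ k (Finset.mem_filter.2 ⟨hf, hpf⟩)] at hvertex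
    refine (H.add_mem_cancel_right <| sum_mem fun e he => ?_).1 hvertex
    obtain ⟨hef, he⟩ := Finset.mem_erase.1 he
    obtain ⟨heS, hpe⟩ := Finset.mem_filter.1 he
    exact hk e heS hef fun heg => hpg (heg ▸ hpe)
  have mem_of_ne : ∀ e ∈ S.powersetCard 2, e ≠ g → k e ∈ H := fun e he heg => by
    rcases eq_or_ne e f with rfl | hef
    exacts [mem_f, hk e he hef heg]
  have mem_g : k g ∈ H := by
    rw [← Finset.add_sum_erase _ k hg] at hsum
    exact (H.add_mem_cancel_right <| sum_mem fun e he =>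
      mem_of_ne e (Finset.mem_of_mem_erase he) (Finset.ne_of_mem_erase he)).1 hsum
  intro e he
  rcases eq_or_ne e g with rfl | heg
  exacts [mem_g, mem_of_ne e he heg]

theorem forall_vertexSum_insert_eq_iff {S : Finset α} {p : α} (hp : p ∉ S) (k : Finset α → X)
    (d : α → X) :
    (∀ i ∈ insert p S, vertexSum (insert p S) k i = d i) ↔
      (∀ i ∈ S, k {p, i} = d i - vertexSum S k i) ∧
        2 • ∑ e ∈ S.powersetCard 2, k e = ∑ i ∈ S, d i - d p := by
  rw [Finset.forall_mem_insert, and_comm]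
  have at_rest : (∀ i ∈ S, vertexSum (insert p S) k i = d i) ↔
      ∀ i ∈ S, k {p, i} = d i - vertexSum S k i :=
    forall₂_congr fun i hi => by rw [vertexSum_insert_of_mem hp hi, eq_sub_iff_add_eq]
  rw [at_rest]
  refine and_congr_right fun hub => ?_
  rw [vertexSum_insert_self hp, Finset.sum_congr rfl hub, Finset.sum_sub_distrib, sum_vertexSum,
    sub_eq_iff_eq_add, eq_sub_iff_add_eq', eq_comm]

theorem edgeWeight_pair (t : X) (c : α → X) (k : Finset α → X) {a b : α} (hab : a ≠ b) :
    edgeWeight t c k {a, b} = t + (c a + c b) + k {a, b} := by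
  rw [edgeWeight, Finset.sum_pair hab]

theorem vertexSum_edgeWeight {S : Finset α} {i : α} (hi : i ∈ S) (t : X) (c : α → X)
    (k : Finset α → X) :
    vertexSum S (edgeWeight t c k) i =
      ((S.card : ℤ) - 1) • t + ((S.card : ℤ) - 2) • c i + ∑ j ∈ S, c j + vertexSum S k i := by
  have pair : ∀ j ∈ S.erase i, edgeWeight t c k {i, j} = t + (c i + c j) + k {i, j} :=
    fun j hj => edgeWeight_pair t c k (Finset.ne_of_mem_erase hj).symm
  have card_erase : ((S.erase i).card : ℤ) = S.card - 1 := by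
    rw [← Finset.card_erase_add_one hi]; push_cast; ring
  rw [vertexSum_eq_sum_erase hi, vertexSum_eq_sum_erase hi, Finset.sum_congr rfl pair,
    ← Finset.add_sum_erase S c hi]
  simp only [Finset.sum_add_distrib, Finset.sum_const, ← natCast_zsmul, card_erase]
  module

/-- The edge weights annihilated by the Laplacian of the Johnson graph on the `2`-subsets of `S`.
The form of the equation reflects that this Laplacian is `2(|S| - 1) - NᵀN`, where `N` is the
vertex-edge incidence matrix of the complete graph on `S`. -/
def IsHarmonic (S : Finset α) (x : Finset α → X) : Prop :=
  ∀ e ∈ S.powersetCard 2, (2 * ((S.card : ℤ) - 1)) • x e = ∑ i ∈ e, vertexSum S x i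

/-- The conditions on a potential `c` and a remainder `k` under which `edgeWeight t c k` is
harmonic. -/
structure IsBalanced (S : Finset α) (c : α → X) (k : Finset α → X) : Prop where
  two_smul_sum : (2 : ℤ) • ∑ i ∈ S, c i = 0
  smul_edge : ∀ e ∈ S.powersetCard 2, (2 * ((S.card : ℤ) - 1)) • k e = 0
  vertexSum_eq : ∀ i ∈ S, vertexSum S k i = (S.card : ℤ) • c i

theorem isHarmonic_edgeWeight_iff {S : Finset α} {t : X} {c : α → X} {k : Finset α → X} :
    IsHarmonic S (edgeWeight t c k) ↔ ∀ a ∈ S, ∀ b ∈ S, a ≠ b →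
      (2 * ((S.card : ℤ) - 1)) • k {a, b} + ((S.card : ℤ) • c a - vertexSum S k a) +
        ((S.card : ℤ) • c b - vertexSum S k b) = (2 : ℤ) • ∑ i ∈ S, c i := by
  rw [IsHarmonic, forall_mem_powersetCard_two]
  refine forall₂_congr fun a ha => forall₂_congr fun b hb => forall_congr' fun hab => ?_
  rw [edgeWeight_pair t c k hab, Finset.sum_pair hab, vertexSum_edgeWeight ha,
    vertexSum_edgeWeight hb]
  constructor <;> intro h <;> linear_combination (norm := module) h

theorem IsBalanced.isHarmonic {S : Finset α} {c : α → X} {k : Finset α → X}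
    (h : IsBalanced S c k) (t : X) : IsHarmonic S (edgeWeight t c k) :=
  isHarmonic_edgeWeight_iff.2 fun a ha b hb hab => by
    rw [h.smul_edge _ (pair_mem_powersetCard_two ha hb hab), h.vertexSum_eq a ha,
      h.vertexSum_eq b hb, h.two_smul_sum, sub_self, sub_self, add_zero, add_zero]

end EdgeWeights

section JohnsonLaplacian

variable {X : Type*} [AddCommGroup X] {n : ℕ}

theorem ksubsets_eq_powersetCard (n k : ℕ) : ksubsets n k = (Finset.Icc 1 n).powersetCard k := by
  ext A
  simp only [ksubsets, Finset.mem_filter, Finset.mem_powerset, Finset.mem_powersetCard]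

theorem card_of_mem_ksubsets {k : ℕ} {A : Finset ℕ} (hA : A ∈ ksubsets n k) : A.card = k :=
  (Finset.mem_filter.1 hA).2

theorem johnsonLap_apply (A B : ↥(ksubsets n 2)) :
    johnsonLap n A B =
      (if A = B then 2 * ((n : ℤ) - 1) else 0) - ((A : Finset ℕ) ∩ B).card := by
  rw [johnsonLap, Matrix.of_apply]
  split_ifs with hAB hinter
  · rw [hAB, Finset.inter_self, card_of_mem_ksubsets B.2]
    push_cast
    ring
  · simp [hinter]
  · have inter_ssubset : (A : Finset ℕ) ∩ B ⊂ A :=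
      Finset.inter_subset_left.ssubset_of_ne fun h =>
        hAB <| Subtype.ext <| Finset.eq_of_subset_of_card_le (Finset.inter_eq_left.1 h) <| by
          rw [card_of_mem_ksubsets A.2, card_of_mem_ksubsets B.2]
    have card_lt := Finset.card_lt_card inter_ssubset
    rw [card_of_mem_ksubsets A.2] at card_lt
    omega

theorem sum_johnsonLap_smul (x : Finset ℕ → X) (A : ↥(ksubsets n 2)) :
    ∑ B, johnsonLap n A B • x B =
      (2 * ((n : ℤ) - 1)) • x A - ∑ i ∈ (A : Finset ℕ), vertexSum (Finset.Icc 1 n) x i := by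
  simp only [johnsonLap_apply, sub_smul, natCast_zsmul, Finset.sum_sub_distrib, ite_smul, zero_smul,
    Finset.sum_ite_eq, Finset.mem_univ, if_true]
  rw [sum_vertexSum_eq_sum_card_inter_nsmul, ← ksubsets_eq_powersetCard,
    Finset.sum_coe_sort (ksubsets n 2) fun B => ((A : Finset ℕ) ∩ B).card • x B]

theorem isHarmonic_Icc_iff {x : Finset ℕ → X} :
    IsHarmonic (Finset.Icc 1 n) x ↔ ∀ A, ∑ B, johnsonLap n A B • x B = 0 := by
  simp only [sum_johnsonLap_smul, sub_eq_zero, IsHarmonic, ← ksubsets_eq_powersetCard,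
    Nat.card_Icc, Nat.add_sub_cancel, Subtype.forall]

/-- The class in the Smith group of the Johnson Laplacian of a `2`-subset of `{1,…,n}`, extended
by zero to all finite sets. -/
noncomputable def edgeClass (n : ℕ) : Finset ℕ → SmithGroup (johnsonLap n) :=
  Function.extend Subtype.val (SmithGroup.gen (johnsonLap n)) 0

theorem edgeClass_coe (A : ↥(ksubsets n 2)) : edgeClass n A = SmithGroup.gen (johnsonLap n) A :=
  Subtype.val_injective.extend_apply _ _ _

theorem isHarmonic_edgeClass (n : ℕ) : IsHarmonic (Finset.Icc 1 n) (edgeClass n) :=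
  isHarmonic_Icc_iff.2 fun A => by
    simp only [edgeClass_coe]
    exact SmithGroup.sum_smul_gen _ A

end JohnsonLaplacian

section Normalization

open Finset

variable {X : Type*} [AddCommGroup X]

/-- The gauge fixing that makes the decomposition `edgeWeight t c k` of an edge weighting of the
complete graph on the positive integers unique. -/
structure IsNormalized (c : ℕ → X) (k : Finset ℕ → X) : Prop where
  vertex_one : c 1 = 0
  edge_one : ∀ j ≠ 1, k {1, j} = 0
  edge_two_three : k {2, 3} = 0

theorem exists_isNormalized (x : Finset ℕ → X) :
    ∃ t c k, IsNormalized c k ∧ x = edgeWeight t c k := by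
  let t := x {1, 2} + x {1, 3} - x {2, 3}
  let c : ℕ → X := fun i => if i = 1 then 0 else x {1, i} - t
  refine ⟨t, c, fun e => x e - (t + ∑ i ∈ e, c i), ⟨if_pos rfl, fun j hj => ?_, ?_⟩, ?_⟩
  · simp only [sum_pair hj.symm, c, if_true, if_neg hj]
    abel
  · simp only [sum_pair (show (2 : ℕ) ≠ 3 by decide), c, t, OfNat.ofNat_ne_one, if_false]
    abel
  · funext e
    rw [edgeWeight, add_sub_cancel]

namespace IsNormalized

variable {n : ℕ} {t t' : X} {c c' : ℕ → X} {k k' : Finset ℕ → X}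

theorem map {Y : Type*} [AddCommGroup Y] (h : IsNormalized c k) (φ : X →+ Y) :
    IsNormalized (φ ∘ c) (φ ∘ k) where
  vertex_one := by rw [Function.comp_apply, h.vertex_one, map_zero]
  edge_one j hj := by rw [Function.comp_apply, h.edge_one j hj, map_zero]
  edge_two_three := by rw [Function.comp_apply, h.edge_two_three, map_zero]

theorem edgeWeight_one (h : IsNormalized c k) (t : X) {j : ℕ} (hj : j ≠ 1) :
    edgeWeight t c k {1, j} = t + c j := by
  rw [edgeWeight_pair t c k hj.symm, h.vertex_one, h.edge_one j hj, zero_add, add_zero]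

theorem edgeWeight_two_three (h : IsNormalized c k) (t : X) :
    edgeWeight t c k {2, 3} = t + (c 2 + c 3) := by
  rw [edgeWeight_pair t c k (by decide), h.edge_two_three, add_zero]

theorem unique (hn : 3 ≤ n) (h : IsNormalized c k) (h' : IsNormalized c' k')
    (heq : ∀ e ∈ (Icc 1 n).powersetCard 2, edgeWeight t c k e = edgeWeight t' c' k' e) :
    t = t' ∧ (∀ i ∈ Icc 1 n, c i = c' i) ∧ ∀ e ∈ (Icc 1 n).powersetCard 2, k e = k' e := by
  rw [forall_mem_powersetCard_two] at heq
  have mem_one : 1 ∈ Icc 1 n := mem_Icc.2 ⟨le_rfl, by omega⟩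
  have mem_two : 2 ∈ Icc 1 n := mem_Icc.2 ⟨by omega, by omega⟩
  have mem_three : 3 ∈ Icc 1 n := mem_Icc.2 ⟨by omega, hn⟩
  have eq_star : ∀ j ∈ Icc 1 n, j ≠ 1 → t + c j = t' + c' j := fun j hj hj1 => by
    rw [← h.edgeWeight_one t hj1, ← h'.edgeWeight_one t' hj1, heq 1 mem_one j hj hj1.symm]
  have eq_two_three : t + (c 2 + c 3) = t' + (c' 2 + c' 3) := by
    rw [← h.edgeWeight_two_three, ← h'.edgeWeight_two_three,
      heq 2 mem_two 3 mem_three (by decide)]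
  have eq_const : t = t' := by
    linear_combination (norm := module)
      eq_star 2 mem_two (by decide) + eq_star 3 mem_three (by decide) - eq_two_three
  have eq_vertex : ∀ i ∈ Icc 1 n, c i = c' i := fun i hi => by
    rcases eq_or_ne i 1 with rfl | hi1
    · rw [h.vertex_one, h'.vertex_one]
    · exact add_left_cancel ((eq_star i hi hi1).trans (congrArg (· + c' i) eq_const.symm))
  refine ⟨eq_const, eq_vertex, forall_mem_powersetCard_two.2 fun a ha b hb hab => ?_⟩
  have eq_pair := heq a ha b hb hab
  rw [edgeWeight_pair _ _ _ hab, edgeWeight_pair _ _ _ hab, eq_const, eq_vertex a ha,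
    eq_vertex b hb] at eq_pair
  exact add_left_cancel eq_pair

theorem vertexSum_one (h : IsNormalized c k) (hn : 1 ≤ n) : vertexSum (Icc 1 n) k 1 = 0 := by
  rw [vertexSum_eq_sum_erase (mem_Icc.2 ⟨le_rfl, hn⟩)]
  exact sum_eq_zero fun j hj => h.edge_one j (ne_of_mem_erase hj)

theorem isBalanced_of_isHarmonic (hn : 3 ≤ n) (h : IsNormalized c k)
    (hx : IsHarmonic (Icc 1 n) (edgeWeight t c k)) : IsBalanced (Icc 1 n) c k := by
  have mem_one : 1 ∈ Icc 1 n := mem_Icc.2 ⟨le_rfl, by omega⟩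
  have mem_two : 2 ∈ Icc 1 n := mem_Icc.2 ⟨by omega, by omega⟩
  have mem_three : 3 ∈ Icc 1 n := mem_Icc.2 ⟨by omega, hn⟩
  rw [isHarmonic_edgeWeight_iff] at hx
  simp only [Nat.card_Icc, Nat.add_sub_cancel] at hx
  let δ : ℕ → X := fun i => (n : ℤ) • c i - vertexSum (Icc 1 n) k i
  have defect_one : δ 1 = 0 := by
    simp only [δ, h.vertex_one, h.vertexSum_one (show 1 ≤ n by omega), smul_zero, sub_zero]
  have defect_star : ∀ j ∈ Icc 1 n, j ≠ 1 → δ j = (2 : ℤ) • ∑ i ∈ Icc 1 n, c i :=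
    fun j hj hj1 => by
      have := hx 1 mem_one j hj hj1.symm
      rwa [h.edge_one j hj1, smul_zero, zero_add, show _ - _ = (0 : X) from defect_one,
        zero_add] at this
  have two_smul_sum : (2 : ℤ) • ∑ i ∈ Icc 1 n, c i = 0 := by
    have at_two_three := hx 2 mem_two 3 mem_three (by decide)
    rw [h.edge_two_three, smul_zero, zero_add] at at_two_three
    linear_combination (norm := module) at_two_three - defect_star 2 mem_two (by decide) -
      defect_star 3 mem_three (by decide)
  have defect_eq_zero : ∀ i ∈ Icc 1 n, δ i = 0 := fun i hi => by
    rcases eq_or_ne i 1 with rfl | hi1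
    · exact defect_one
    · rw [defect_star i hi hi1, two_smul_sum]
  refine ⟨two_smul_sum, forall_mem_powersetCard_two.2 fun a ha b hb hab => ?_, fun i hi => ?_⟩
  · have at_pair := hx a ha b hb hab
    rw [two_smul_sum] at at_pair
    rw [Nat.card_Icc, Nat.add_sub_cancel]
    linear_combination (norm := module) at_pair - defect_eq_zero a ha - defect_eq_zero b hb
  · rw [Nat.card_Icc, Nat.add_sub_cancel]
    exact (sub_eq_zero.1 (defect_eq_zero i hi)).symm

theorem vertexSum_eq_iff (hn : 3 ≤ n) (h : IsNormalized c k) :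
    (∀ i ∈ Icc 1 n, vertexSum (Icc 1 n) k i = (n : ℤ) • c i) ↔
      (∀ i ∈ Icc 3 n, k {2, i} = (n : ℤ) • c i - vertexSum (Icc 3 n) k i) ∧
        2 • ∑ e ∈ (Icc 3 n).powersetCard 2, k e =
          (n : ℤ) • (∑ i ∈ Icc 3 n, c i - c 2) := by
  have Icc_one : Icc 1 n = insert 1 (Icc 2 n) := (insert_Icc_add_one_left_eq_Icc (by omega)).symm
  have Icc_two : Icc 2 n = insert 2 (Icc 3 n) := (insert_Icc_add_one_left_eq_Icc (by omega)).symm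
  have vertexSum_Icc_two : ∀ i ∈ Icc 2 n, vertexSum (Icc 1 n) k i = vertexSum (Icc 2 n) k i :=
    fun i hi => by
      have hi1 : i ≠ 1 := by rw [mem_Icc] at hi; omega
      rw [Icc_one, vertexSum_insert_of_mem (by simp) hi, h.edge_one i hi1, zero_add]
  have at_one : vertexSum (Icc 1 n) k 1 = (n : ℤ) • c 1 := by
    rw [h.vertexSum_one (by omega), h.vertex_one, smul_zero]
  calc
    _ ↔ ∀ i ∈ Icc 2 n, vertexSum (Icc 2 n) k i = (n : ℤ) • c i := by
      rw [Icc_one, forall_mem_insert, ← Icc_one, and_iff_right at_one]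
      exact forall₂_congr fun i hi => by rw [vertexSum_Icc_two i hi]
    _ ↔ _ := by
      rw [Icc_two, forall_vertexSum_insert_eq_iff (by simp) k fun i => (n : ℤ) • c i, smul_sub,
        smul_sum (f := c)]

end IsNormalized

end Normalization

section Elimination

open Finset

variable {X : Type*} [AddCommGroup X] {n : ℕ}

/-- The edges whose remainders are free: those not meeting `{1, 2}`, other than the pivots `{3, 4}`
and `{4, 5}`, which are determined by the weighted degree of `3` and by the total weight. -/
def freeEdges (n : ℕ) : Finset (Finset ℕ) :=
  (((Icc 3 n).powersetCard 2).erase {3, 4}).erase {4, 5}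

theorem mem_freeEdges {e : Finset ℕ} :
    e ∈ freeEdges n ↔ e ≠ {4, 5} ∧ e ≠ {3, 4} ∧ e ∈ (Icc 3 n).powersetCard 2 := by
  rw [freeEdges, mem_erase, mem_erase]

theorem three_four_mem_powersetCard (hn : 4 ≤ n) : {3, 4} ∈ (Icc 3 n).powersetCard 2 :=
  pair_mem_powersetCard_two (mem_Icc.2 ⟨le_rfl, by omega⟩) (mem_Icc.2 ⟨by omega, hn⟩) (by decide)

theorem four_five_mem_powersetCard (hn : 5 ≤ n) : {4, 5} ∈ (Icc 3 n).powersetCard 2 :=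
  pair_mem_powersetCard_two (mem_Icc.2 ⟨by omega, by omega⟩) (mem_Icc.2 ⟨by omega, hn⟩)
    (by decide)

theorem card_freeEdges (hn : 5 ≤ n) : #(freeEdges n) = n.choose 2 - 2 * n + 1 := by
  have mem_erase_pivot : {4, 5} ∈ ((Icc 3 n).powersetCard 2).erase {3, 4} :=
    mem_erase.2 ⟨by decide, four_five_mem_powersetCard hn⟩
  rw [freeEdges, card_erase_of_mem mem_erase_pivot,
    card_erase_of_mem (three_four_mem_powersetCard (by omega)), card_powersetCard, Nat.card_Icc]
  obtain ⟨m, rfl⟩ := Nat.exists_eq_add_of_le' hn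
  have pascal : (m + 5).choose 2 = (m + 4) + ((m + 3) + (m + 3).choose 2) := by
    rw [Nat.choose_succ_succ' (m + 4) 1, Nat.choose_succ_succ' (m + 3) 1, Nat.choose_one_right,
      Nat.choose_one_right]
  have three_le : 3 ≤ (m + 3).choose 2 := Nat.choose_le_choose 2 (Nat.le_add_left 3 m)
  rw [show m + 5 + 1 - 3 = m + 3 by omega]
  omega

theorem Icc_one_eq_insert_insert (hn : 2 ≤ n) : Icc 1 n = insert 1 (insert 2 (Icc 3 n)) := by
  rw [← insert_Icc_add_one_left_eq_Icc (show 1 ≤ n by omega), one_add_one_eq_two,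
    ← insert_Icc_add_one_left_eq_Icc hn]
  rfl

theorem sum_Icc_one_eq_add_add (hn : 2 ≤ n) (c : ℕ → X) :
    ∑ i ∈ Icc 1 n, c i = c 1 + (c 2 + ∑ i ∈ Icc 3 n, c i) := by
  rw [Icc_one_eq_insert_insert hn, sum_insert (by simp), sum_insert (by simp)]

/-- The relations between the vertex coordinates `c i` with `3 ≤ i`, the remainders `k e` of the
free edges, the total vertex weight `C` and the excess `W` of a normalized balanced weighting that
are left after eliminating all other coordinates. -/
structure ReducedRelations (n : ℕ) (c : ℕ → X) (k : Finset ℕ → X) (C W : X) : Prop where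
  vertex : ∀ i ∈ Icc 3 n, (2 * (n : ℤ) * ((n : ℤ) - 1)) • c i = 0
  edge : ∀ e ∈ freeEdges n, (2 * ((n : ℤ) - 1)) • k e = 0
  total : (2 : ℤ) • C = 0
  excess : (2 : ℤ) • W = (n : ℤ) • C

/-- The total remainder of the edges not meeting `{1, 2}`, corrected by a multiple of the vertex
weights so that its only relation to the other free coordinates is `2 W = n C`. -/
def edgeExcess (n : ℕ) (c : ℕ → X) (k : Finset ℕ → X) : X :=
  ∑ e ∈ (Icc 3 n).powersetCard 2, k e - (n : ℤ) • ∑ i ∈ Icc 3 n, c i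

theorem map_edgeExcess {Y : Type*} [AddCommGroup Y] (φ : X →+ Y) (c : ℕ → X) (k : Finset ℕ → X) :
    φ (edgeExcess n c k) = edgeExcess n (φ ∘ c) (φ ∘ k) := by
  simp only [edgeExcess, map_sub, map_sum, map_zsmul, Function.comp_apply]

theorem ReducedRelations.smul_excess {c : ℕ → X} {k : Finset ℕ → X} {C W : X}
    (h : ReducedRelations n c k C W) : (2 * ((n : ℤ) - 1)) • W = 0 := by
  obtain ⟨m, hm⟩ := even_iff_two_dvd.1 (Int.even_mul_pred_self n)
  rw [mul_comm, mul_smul, h.excess, smul_smul, mul_comm, hm, mul_comm, mul_smul, h.total,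
    smul_zero]

namespace IsNormalized

variable {c : ℕ → X} {k : Finset ℕ → X}

theorem edge_mem (H : AddSubgroup X) (hn : 5 ≤ n) (h : IsNormalized c k)
    (hk_two : ∀ i ∈ Icc 3 n, k {2, i} = (n : ℤ) • c i - vertexSum (Icc 3 n) k i)
    (hc : ∀ i ∈ Icc 3 n, (n : ℤ) • c i ∈ H) (hk : ∀ e ∈ freeEdges n, k e ∈ H)
    (hexcess : edgeExcess n c k ∈ H) : ∀ e ∈ (Icc 1 n).powersetCard 2, k e ∈ H := by
  have mem_three : 3 ∈ Icc 3 n := mem_Icc.2 ⟨le_rfl, by omega⟩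
  have vertexSum_mem : vertexSum (Icc 3 n) k 3 ∈ H := by
    have := hk_two 3 mem_three
    rw [h.edge_two_three, eq_comm, sub_eq_zero] at this
    exact this ▸ hc 3 mem_three
  have sum_mem_H : ∑ e ∈ (Icc 3 n).powersetCard 2, k e ∈ H := by
    have := H.add_mem hexcess (sum_mem hc)
    rwa [edgeExcess, smul_sum, sub_add_cancel] at this
  have rest_mem : ∀ e ∈ (Icc 3 n).powersetCard 2, k e ∈ H :=
    forall_mem_of_vertexSum_mem_of_sum_mem (p := 3) H (three_four_mem_powersetCard (by omega))
      (four_five_mem_powersetCard hn) (by decide) (by decide)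
      (fun e he hf hg => hk e (mem_freeEdges.2 ⟨hg, hf, he⟩)) vertexSum_mem sum_mem_H
  rw [Icc_one_eq_insert_insert (by omega), forall_mem_powersetCard_two_insert (by simp),
    forall_mem_powersetCard_two_insert (by simp)]
  refine ⟨fun j hj => ?_, fun i hi => ?_, rest_mem⟩
  · have hj1 : j ≠ 1 := by rintro rfl; simp at hj
    rw [h.edge_one j hj1]
    exact H.zero_mem
  · rw [hk_two i hi]
    exact H.sub_mem (hc i hi) (sum_mem fun e he => rest_mem e (mem_filter.1 he).1)

theorem isBalanced_iff_reducedRelations (hn : 5 ≤ n) (h : IsNormalized c k) :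
    IsBalanced (Icc 1 n) c k ↔
      (∀ i ∈ Icc 3 n, k {2, i} = (n : ℤ) • c i - vertexSum (Icc 3 n) k i) ∧
        ReducedRelations n c k (∑ i ∈ Icc 1 n, c i) (edgeExcess n c k) := by
  have vertexSum_eq_iff := h.vertexSum_eq_iff (show 3 ≤ n by omega)
  have sum_eq : ∑ i ∈ Icc 1 n, c i = c 2 + ∑ i ∈ Icc 3 n, c i := by
    rw [sum_Icc_one_eq_add_add (by omega), h.vertex_one, zero_add]
  constructor
  · rintro ⟨two_smul_sum, smul_edge, vertexSum_eq⟩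
    simp only [Nat.card_Icc, Nat.add_sub_cancel] at smul_edge vertexSum_eq
    obtain ⟨k_two, two_smul_remainder⟩ := vertexSum_eq_iff.1 vertexSum_eq
    have Icc_subset : Icc 3 n ⊆ Icc 1 n := Icc_subset_Icc_left (by omega)
    refine ⟨k_two, fun i hi => ?_, fun e he => ?_, two_smul_sum, ?_⟩
    · rw [mul_right_comm, mul_smul, ← vertexSum_eq i (Icc_subset hi), vertexSum, smul_sum]
      exact sum_eq_zero fun e he => smul_edge e (mem_filter.1 he).1
    · exact smul_edge e (powersetCard_mono Icc_subset (mem_freeEdges.1 he).2.2)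
    · rw [sum_eq] at two_smul_sum ⊢
      rw [edgeExcess]
      linear_combination (norm := module) two_smul_remainder - (n : ℤ) • two_smul_sum
  · rintro ⟨k_two, hr⟩
    refine ⟨hr.total, ?_, ?_⟩
    · rw [Nat.card_Icc, Nat.add_sub_cancel]
      let torsion : AddSubgroup X := (zsmulAddGroupHom (2 * ((n : ℤ) - 1))).ker
      refine h.edge_mem torsion hn k_two (fun i hi => ?_) hr.edge hr.smul_excess
      rw [AddMonoidHom.mem_ker, zsmulAddGroupHom_apply, smul_smul, mul_right_comm]
      exact hr.vertex i hi
    · rw [Nat.card_Icc, Nat.add_sub_cancel]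
      refine vertexSum_eq_iff.2 ⟨k_two, ?_⟩
      have total := hr.total
      have excess := hr.excess
      rw [sum_eq] at total excess
      rw [edgeExcess] at excess
      linear_combination (norm := module) excess + (n : ℤ) • total

theorem edgeWeight_mem (H : AddSubgroup X) (hn : 5 ≤ n) (h : IsNormalized c k)
    (hb : IsBalanced (Icc 1 n) c k) {t : X} (ht : t ∈ H) (hc : ∀ i ∈ Icc 3 n, c i ∈ H)
    (hk : ∀ e ∈ freeEdges n, k e ∈ H) (htotal : ∑ i ∈ Icc 1 n, c i ∈ H)
    (hexcess : edgeExcess n c k ∈ H) :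
    ∀ e ∈ (Icc 1 n).powersetCard 2, edgeWeight t c k e ∈ H := by
  have vertex_two_mem : c 2 ∈ H := by
    rw [sum_Icc_one_eq_add_add (by omega), h.vertex_one, zero_add] at htotal
    exact (H.add_mem_cancel_right (sum_mem hc)).1 htotal
  have vertex_mem : ∀ i ∈ Icc 1 n, c i ∈ H := by
    rw [Icc_one_eq_insert_insert (by omega), forall_mem_insert, forall_mem_insert, h.vertex_one]
    exact ⟨H.zero_mem, vertex_two_mem, hc⟩
  have edge_mem := h.edge_mem H hn ((h.isBalanced_iff_reducedRelations hn).1 hb).1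
    (fun i hi => H.zsmul_mem (hc i hi) _) hk hexcess
  exact fun e he => H.add_mem (H.add_mem ht <| sum_mem fun i hi =>
    vertex_mem i ((mem_powersetCard.1 he).1 hi)) (edge_mem e he)

end IsNormalized

theorem exists_isNormalized_of_coordinates (hn : 5 ≤ n) (c : ℕ → X) (k : Finset ℕ → X) (C W : X) :
    ∃ c' k', IsNormalized c' k' ∧
      (∀ i ∈ Icc 3 n, k' {2, i} = (n : ℤ) • c' i - vertexSum (Icc 3 n) k' i) ∧
      (∀ i ∈ Icc 3 n, c' i = c i) ∧ (∀ e ∈ freeEdges n, k' e = k e) ∧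
      ∑ i ∈ Icc 1 n, c' i = C ∧ edgeExcess n c' k' = W := by
  obtain ⟨A, A_eq, vertexSum_A, sum_A⟩ := exists_vertexSum_eq_and_sum_eq (p := 3)
    (three_four_mem_powersetCard (by omega)) (four_five_mem_powersetCard hn) (by decide)
    (by decide) k ((n : ℤ) • c 3) (W + (n : ℤ) • ∑ i ∈ Icc 3 n, c i)
  let c' : ℕ → X := fun i => if i = 1 then 0 else if i = 2 then C - ∑ i ∈ Icc 3 n, c i else c i
  let k' : Finset ℕ → X := fun e =>
    if 1 ∈ e then 0
    else if 2 ∈ e then ∑ i ∈ e.erase 2, ((n : ℤ) • c i - vertexSum (Icc 3 n) A i)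
    else A e
  have c'_eq : ∀ i ∈ Icc 3 n, c' i = c i := fun i hi => by
    rw [mem_Icc] at hi
    simp only [c', show i ≠ 1 by omega, show i ≠ 2 by omega, if_false]
  have k'_eq : ∀ e ∈ (Icc 3 n).powersetCard 2, k' e = A e := fun e he => by
    have notMem : ∀ i < 3, i ∉ e := fun i hi hie =>
      hi.not_ge (mem_Icc.1 ((mem_powersetCard.1 he).1 hie)).1
    simp only [k', notMem 1 (by decide), notMem 2 (by decide), if_false]
  have k'_two : ∀ i, 3 ≤ i → k' {2, i} = (n : ℤ) • c i - vertexSum (Icc 3 n) A i := fun i hi => by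
    simp [k', show (1 : ℕ) ≠ i by omega, show (2 : ℕ) ≠ i by omega]
  refine ⟨c', k', ⟨if_pos rfl, fun j _ => if_pos (mem_insert_self _ _), ?_⟩, fun i hi => ?_, c'_eq,
    fun e he => ?_, ?_, ?_⟩
  · rw [k'_two 3 le_rfl, vertexSum_A, sub_self]
  · rw [k'_two i (mem_Icc.1 hi).1, c'_eq i hi, vertexSum_congr k'_eq]
  · obtain ⟨hg, hf, heS⟩ := mem_freeEdges.1 he
    rw [k'_eq e heS, A_eq e hf hg]
  · rw [sum_Icc_one_eq_add_add (by omega), sum_congr rfl c'_eq]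
    simp [c']
  · rw [edgeExcess, sum_congr rfl k'_eq, sum_congr rfl c'_eq, sum_A, add_sub_cancel_right]

end Elimination

theorem prod_hom_ext {A B X : Type*} [AddCommGroup A] [AddCommGroup B] [AddCommGroup X]
    {f g : A × B →+ X} (hl : f.comp (AddMonoidHom.inl A B) = g.comp (AddMonoidHom.inl A B))
    (hr : f.comp (AddMonoidHom.inr A B) = g.comp (AddMonoidHom.inr A B)) : f = g := by
  rw [← f.coprod_unique, hl, hr, g.coprod_unique]

section ZModHom

variable {ι X : Type*} [AddCommGroup X] {N : ℕ}

theorem exists_zmod_hom {y : X} (hy : (N : ℤ) • y = 0) : ∃ f : ZMod N →+ X, f 1 = y := by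
  refine ⟨ZMod.lift N ⟨zmultiplesHom X y, hy⟩, ?_⟩
  rw [← Int.cast_one, ZMod.lift_coe]
  exact one_zsmul y

theorem zmod_hom_ext {f g : ZMod N →+ X} (h : f 1 = g 1) : f = g := by
  ext z
  obtain ⟨m, rfl⟩ := ZMod.intCast_surjective z
  rw [← mul_one (m : ZMod N), ← zsmul_eq_mul, map_zsmul, map_zsmul, h]

variable [DecidableEq ι]

theorem exists_pi_zmod_hom [Finite ι] {y : ι → X} (hy : ∀ i, (N : ℤ) • y i = 0) :
    ∃ f : (ι → ZMod N) →+ X, ∀ i, f (Pi.single i 1) = y i := by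
  cases nonempty_fintype ι
  choose f hf using fun i => exists_zmod_hom (hy i)
  refine ⟨∑ i, (f i).comp (Pi.evalAddMonoidHom _ i), fun i => ?_⟩
  rw [AddMonoidHom.finsetSum_apply, Finset.sum_eq_single i]
  · simp [hf]
  · intro j _ hji
    simp [hji]
  · exact fun hi => absurd (Finset.mem_univ i) hi

theorem pi_zmod_hom_ext [Finite ι] {f g : (ι → ZMod N) →+ X}
    (h : ∀ i, f (Pi.single i 1) = g (Pi.single i 1)) : f = g :=
  AddMonoidHom.functions_ext' _ _ _ fun i => zmod_hom_ext (h i)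

end ZModHom

section ReducedGroup

open Finset

variable {X : Type*} [AddCommGroup X] {n : ℕ}

/-- The relations `2 C = 0` and `2 W = n C` among the last two generators. -/
def excessMatrix (n : ℕ) : Matrix (Fin 2) (Fin 2) ℤ := !![2, 0; -(n : ℤ), 2]

theorem forall_sum_excessMatrix_smul_eq_zero_iff {x : Fin 2 → X} :
    (∀ r, ∑ j, excessMatrix n r j • x j = 0) ↔
      (2 : ℤ) • x 0 = 0 ∧ (2 : ℤ) • x 1 = (n : ℤ) • x 0 := by
  simp [excessMatrix, Fin.forall_fin_two, Fin.sum_univ_two, neg_add_eq_zero, eq_comm (a := n • x 0)]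

/-- The abelian group presented by the free coordinates of a harmonic weighting and their
`ReducedRelations`. -/
abbrev ReducedGroup (n : ℕ) : Type :=
  ℤ × (↥(freeEdges n) → ZMod (2 * (n - 1))) × (↥(Icc 3 n) → ZMod (2 * n * (n - 1))) ×
    SmithGroup (excessMatrix n)

namespace ReducedGroup

/-- The generator of `ReducedGroup n` standing for the constant part. -/
def const (n : ℕ) : ReducedGroup n := (1, 0, 0, 0)

/-- The generators of `ReducedGroup n` standing for the remainders of the free edges, extended by
zero to all finite sets. -/
def edge (n : ℕ) (e : Finset ℕ) : ReducedGroup n :=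
  if h : e ∈ freeEdges n then (0, Pi.single ⟨e, h⟩ 1, 0, 0) else 0

/-- The generators of `ReducedGroup n` standing for the vertex coordinates, extended by zero to all
natural numbers. -/
def vertex (n i : ℕ) : ReducedGroup n :=
  if h : i ∈ Icc 3 n then (0, 0, Pi.single ⟨i, h⟩ 1, 0) else 0

/-- The generator of `ReducedGroup n` standing for the total vertex weight. -/
def total (n : ℕ) : ReducedGroup n := (0, 0, 0, SmithGroup.gen _ 0)

/-- The generator of `ReducedGroup n` standing for the excess. -/
def excess (n : ℕ) : ReducedGroup n := (0, 0, 0, SmithGroup.gen _ 1)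

theorem reducedRelations (hn : 1 ≤ n) :
    ReducedRelations n (vertex n) (edge n) (total n) (excess n) := by
  have smul_pi_zmod {ι : Type} (N : ℕ) (x : ι → ZMod N) : (N : ℤ) • x = 0 := by
    funext i
    simp
  obtain ⟨two_smul_total, two_smul_excess⟩ := forall_sum_excessMatrix_smul_eq_zero_iff.1
    (SmithGroup.sum_smul_gen (excessMatrix n))
  refine ⟨fun i hi => ?_, fun e he => ?_, ?_, ?_⟩
  · have := smul_pi_zmod _ (Pi.single ⟨i, hi⟩ 1 : ↥(Icc 3 n) → ZMod (2 * n * (n - 1)))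
    push_cast [hn] at this
    rw [vertex, dif_pos hi]
    simp only [Prod.smul_mk, smul_zero, this, Prod.mk_zero_zero]
  · have := smul_pi_zmod _ (Pi.single ⟨e, he⟩ 1 : ↥(freeEdges n) → ZMod (2 * (n - 1)))
    push_cast [hn] at this
    rw [edge, dif_pos he]
    simp only [Prod.smul_mk, smul_zero, this, Prod.mk_zero_zero]
  · simp only [total, Prod.smul_mk, smul_zero, two_smul_total, Prod.mk_zero_zero]
  · simp only [total, excess, Prod.smul_mk, smul_zero, two_smul_excess]

theorem exists_hom (hn : 1 ≤ n) {c : ℕ → X} {k : Finset ℕ → X} {C W : X}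
    (h : ReducedRelations n c k C W) (t : X) :
    ∃ ψ : ReducedGroup n →+ X, ψ (const n) = t ∧ (∀ i ∈ Icc 3 n, ψ (vertex n i) = c i) ∧
      (∀ e ∈ freeEdges n, ψ (edge n e) = k e) ∧ ψ (total n) = C ∧ ψ (excess n) = W := by
  obtain ⟨f, hf⟩ := exists_pi_zmod_hom (N := 2 * (n - 1)) (y := fun e : ↥(freeEdges n) => k e)
    fun e => by push_cast [hn]; exact h.edge e e.2
  obtain ⟨g, hg⟩ := exists_pi_zmod_hom (N := 2 * n * (n - 1)) (y := fun i : ↥(Icc 3 n) => c i)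
    fun i => by push_cast [hn]; exact h.vertex i i.2
  let l : SmithGroup (excessMatrix n) →+ X := SmithGroup.lift ![C, W]
    (forall_sum_excessMatrix_smul_eq_zero_iff.2 ⟨h.total, h.excess⟩)
  refine ⟨(zmultiplesHom X t).coprod (f.coprod (g.coprod l)), ?_, fun i hi => ?_, fun e he => ?_,
    ?_, ?_⟩
  · simp [const]
  · rw [vertex, dif_pos hi]
    simp [hg]
  · rw [edge, dif_pos he]
    simp [hf]
  · simp [total, l]
  · simp [excess, l]

theorem hom_ext {f g : ReducedGroup n →+ X} (hconst : f (const n) = g (const n))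
    (hvertex : ∀ i ∈ Icc 3 n, f (vertex n i) = g (vertex n i))
    (hedge : ∀ e ∈ freeEdges n, f (edge n e) = g (edge n e))
    (htotal : f (total n) = g (total n)) (hexcess : f (excess n) = g (excess n)) : f = g := by
  refine prod_hom_ext (AddMonoidHom.ext_int hconst) <|
    prod_hom_ext (pi_zmod_hom_ext fun e => ?_) <|
    prod_hom_ext (pi_zmod_hom_ext fun i => ?_) <|
    SmithGroup.hom_ext <| Fin.forall_fin_two.2 ⟨htotal, hexcess⟩
  · have := hedge e e.2
    rwa [edge, dif_pos e.2] at this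
  · have := hvertex i i.2
    rwa [vertex, dif_pos i.2] at this

end ReducedGroup

end ReducedGroup

section Isomorphism

open Finset

variable {X : Type*} [AddCommGroup X] {n : ℕ}

theorem exists_smithGroup_johnsonLap_hom (hn : 5 ≤ n) {t₀ : SmithGroup (johnsonLap n)}
    {c₀ : ℕ → SmithGroup (johnsonLap n)} {k₀ : Finset ℕ → SmithGroup (johnsonLap n)}
    (h₀ : IsNormalized c₀ k₀) (h₀_eq : edgeClass n = edgeWeight t₀ c₀ k₀) {c : ℕ → X}
    {k : Finset ℕ → X} {C W : X} (h : ReducedRelations n c k C W) (t : X) :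
    ∃ φ : SmithGroup (johnsonLap n) →+ X, φ t₀ = t ∧ (∀ i ∈ Icc 3 n, φ (c₀ i) = c i) ∧
      (∀ e ∈ freeEdges n, φ (k₀ e) = k e) ∧ φ (∑ i ∈ Icc 1 n, c₀ i) = C ∧
      φ (edgeExcess n c₀ k₀) = W := by
  obtain ⟨c', k', h', k'_two, c'_eq, k'_eq, rfl, rfl⟩ :=
    exists_isNormalized_of_coordinates hn c k C W
  have Icc_subset : Icc 3 n ⊆ Icc 1 n := Icc_subset_Icc_left (by omega)
  have edges_subset := powersetCard_mono (n := 2) Icc_subset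
  have relations' : ReducedRelations n c' k' (∑ i ∈ Icc 1 n, c' i) (edgeExcess n c' k') :=
    ⟨fun i hi => c'_eq i hi ▸ h.vertex i hi, fun e he => k'_eq e he ▸ h.edge e he, h.total,
      h.excess⟩
  have balanced' := (h'.isBalanced_iff_reducedRelations hn).2 ⟨k'_two, relations'⟩
  let φ : SmithGroup (johnsonLap n) →+ X :=
    SmithGroup.lift (fun A => edgeWeight t c' k' A) (isHarmonic_Icc_iff.1 (balanced'.isHarmonic t))
  have φ_edgeClass : ∀ A : ↥(ksubsets n 2),
      edgeWeight (φ t₀) (φ ∘ c₀) (φ ∘ k₀) A = edgeWeight t c' k' A := fun A => by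
    rw [← map_edgeWeight, ← h₀_eq, edgeClass_coe, SmithGroup.lift_gen]
  obtain ⟨φ_const, φ_vertex, φ_edge⟩ := (h₀.map φ).unique (by omega) h' fun e he =>
    φ_edgeClass ⟨e, ksubsets_eq_powersetCard n 2 ▸ he⟩
  refine ⟨φ, φ_const, fun i hi => ?_, fun e he => ?_, ?_, ?_⟩
  · exact (φ_vertex i (Icc_subset hi)).trans (c'_eq i hi)
  · exact (φ_edge e (edges_subset (mem_freeEdges.1 he).2.2)).trans (k'_eq e he)
  · rw [map_sum]
    exact sum_congr rfl φ_vertex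
  · rw [map_edgeExcess, edgeExcess, edgeExcess,
      sum_congr rfl fun e he => φ_edge e (edges_subset he),
      sum_congr rfl fun i hi => φ_vertex i (Icc_subset hi)]

theorem nonempty_smithGroup_johnsonLap_addEquiv_reducedGroup (hn : 5 ≤ n) :
    Nonempty (SmithGroup (johnsonLap n) ≃+ ReducedGroup n) := by
  obtain ⟨t, c, k, normalized, edgeClass_eq⟩ := exists_isNormalized (edgeClass n)
  have balanced : IsBalanced (Icc 1 n) c k :=
    normalized.isBalanced_of_isHarmonic (by omega) (edgeClass_eq ▸ isHarmonic_edgeClass n)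
  obtain ⟨φ, φ_const, φ_vertex, φ_edge, φ_total, φ_excess⟩ := exists_smithGroup_johnsonLap_hom hn
    normalized edgeClass_eq (ReducedGroup.reducedRelations (by omega)) (ReducedGroup.const n)
  obtain ⟨ψ, ψ_const, ψ_vertex, ψ_edge, ψ_total, ψ_excess⟩ := ReducedGroup.exists_hom (by omega)
    ((normalized.isBalanced_iff_reducedRelations hn).1 balanced).2 t
  refine ⟨φ.toAddEquiv ψ ?_ ?_⟩
  · refine SmithGroup.hom_ext fun A => ?_
    let fixed : AddSubgroup (SmithGroup (johnsonLap n)) := (ψ.comp φ).eqLocus (AddMonoidHom.id _)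
    rw [← edgeClass_coe, edgeClass_eq]
    refine normalized.edgeWeight_mem fixed hn balanced ((congrArg ψ φ_const).trans ψ_const)
      (fun i hi => (congrArg ψ (φ_vertex i hi)).trans (ψ_vertex i hi))
      (fun e he => (congrArg ψ (φ_edge e he)).trans (ψ_edge e he))
      ((congrArg ψ φ_total).trans ψ_total) ((congrArg ψ φ_excess).trans ψ_excess) A ?_
    exact ksubsets_eq_powersetCard n 2 ▸ A.2
  · exact ReducedGroup.hom_ext ((congrArg φ ψ_const).trans φ_const)
      (fun i hi => (congrArg φ (ψ_vertex i hi)).trans (φ_vertex i hi))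
      (fun e he => (congrArg φ (ψ_edge e he)).trans (φ_edge e he))
      ((congrArg φ ψ_total).trans φ_total) ((congrArg φ ψ_excess).trans φ_excess)

theorem nonempty_excessGroup_addEquiv_of_odd (hn : Odd n) :
    Nonempty (SmithGroup (excessMatrix n) ≃+ ZMod 4) := by
  obtain ⟨m, hm⟩ : ∃ m : ℤ, (n : ℤ) = 2 * m + 1 := (Int.odd_coe_nat n).2 hn
  let C := SmithGroup.gen (excessMatrix n) 0
  let W := SmithGroup.gen (excessMatrix n) 1
  obtain ⟨two_smul_C, two_smul_W⟩ : (2 : ℤ) • C = 0 ∧ (2 : ℤ) • W = (n : ℤ) • C :=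
    forall_sum_excessMatrix_smul_eq_zero_iff.1 (SmithGroup.sum_smul_gen _)
  have two_smul_W_eq : (2 : ℤ) • W = C := by
    rw [hm] at two_smul_W
    linear_combination (norm := module) two_smul_W + m • two_smul_C
  obtain ⟨ψ, ψ_one⟩ : ∃ ψ : ZMod 4 →+ SmithGroup (excessMatrix n), ψ 1 = W :=
    exists_zmod_hom (by linear_combination (norm := module) (2 : ℤ) • two_smul_W_eq + two_smul_C)
  have ψ_two : ψ 2 = C := by
    rw [← two_smul_W_eq, ← ψ_one, ← map_zsmul]
    rfl
  let φ : SmithGroup (excessMatrix n) →+ ZMod 4 := SmithGroup.lift ![2, 1] <|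
    forall_sum_excessMatrix_smul_eq_zero_iff.2 ⟨by decide, by
      have four_eq_zero : (4 : ZMod 4) = 0 := rfl
      simp only [Matrix.cons_val_zero, Matrix.cons_val_one, hm, zsmul_eq_mul]
      push_cast
      linear_combination -(m : ZMod 4) * four_eq_zero⟩
  refine ⟨φ.toAddEquiv ψ (SmithGroup.hom_ext <| Fin.forall_fin_two.2 ⟨?_, ?_⟩)
    (zmod_hom_ext ?_)⟩
  · simpa [φ] using ψ_two
  · simpa [φ] using ψ_one
  · simp [φ, ψ_one, W]

theorem nonempty_excessGroup_addEquiv_of_even (hn : Even n) :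
    Nonempty (SmithGroup (excessMatrix n) ≃+ ZMod 2 × ZMod 2) := by
  have smul_eq_zero {Y : Type} [AddCommGroup Y] {y : Y} (hy : (2 : ℤ) • y = 0) :
      (n : ℤ) • y = 0 := by
    obtain ⟨m, rfl⟩ := hn
    push_cast
    linear_combination (norm := module) (m : ℤ) • hy
  obtain ⟨two_smul_C, two_smul_W⟩ := forall_sum_excessMatrix_smul_eq_zero_iff.1
    (SmithGroup.sum_smul_gen (excessMatrix n))
  rw [smul_eq_zero two_smul_C] at two_smul_W
  obtain ⟨f, f_one⟩ := exists_zmod_hom (N := 2) two_smul_C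
  obtain ⟨g, g_one⟩ := exists_zmod_hom (N := 2) two_smul_W
  let φ : SmithGroup (excessMatrix n) →+ ZMod 2 × ZMod 2 := SmithGroup.lift ![(1, 0), (0, 1)] <|
    forall_sum_excessMatrix_smul_eq_zero_iff.2 ⟨by decide, by
      rw [smul_eq_zero (by decide)]
      decide⟩
  refine ⟨φ.toAddEquiv (f.coprod g) (SmithGroup.hom_ext <| Fin.forall_fin_two.2 ⟨?_, ?_⟩)
    (prod_hom_ext (zmod_hom_ext ?_) (zmod_hom_ext ?_))⟩
  · simp [φ, f_one]
  · simp [φ, g_one]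
  · simp [φ, f_one]
  · simp [φ, g_one]

theorem nonempty_smithGroup_johnsonLap_addEquiv (hn : 5 ≤ n) {T : Type*} [AddCommGroup T]
    (hT : Nonempty (SmithGroup (excessMatrix n) ≃+ T)) :
    Nonempty (SmithGroup (johnsonLap n) ≃+
      (ℤ × (Fin (n.choose 2 - 2 * n + 1) → ZMod (2 * (n - 1))) ×
        (Fin (n - 2) → ZMod (2 * n * (n - 1))) × T)) := by
  obtain ⟨iso⟩ := nonempty_smithGroup_johnsonLap_addEquiv_reducedGroup hn
  obtain ⟨isoT⟩ := hT
  have card_vertices : #(Icc 3 n) = n - 2 := by rw [Nat.card_Icc]; omega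
  exact ⟨iso.trans <| (AddEquiv.refl ℤ).prodCongr <|
    (AddEquiv.arrowCongr (equivFinOfCardEq (card_freeEdges hn)) (AddEquiv.refl _)).prodCongr <|
    (AddEquiv.arrowCongr (equivFinOfCardEq card_vertices) (AddEquiv.refl _)).prodCongr isoT⟩

end Isomorphism

/-- `S(L(J(n,2))) ≅ ℤ ⊕ (ℤ/2(n−1)ℤ)^{C(n,2)−2n+1} ⊕ (ℤ/2n(n−1)ℤ)^{n−2} ⊕ T`,
with `T = ℤ/4ℤ` for odd `n` and `T = ℤ/2ℤ ⊕ ℤ/2ℤ` for even `n`. -/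
theorem statement15 (n : ℕ) (hn : 5 ≤ n) :
    (Odd n → Nonempty (SmithGroup (johnsonLap n) ≃+
      (ℤ × (Fin (n.choose 2 - 2 * n + 1) → ZMod (2 * (n - 1))) ×
        (Fin (n - 2) → ZMod (2 * n * (n - 1))) × ZMod 4))) ∧
    (Even n → Nonempty (SmithGroup (johnsonLap n) ≃+
      (ℤ × (Fin (n.choose 2 - 2 * n + 1) → ZMod (2 * (n - 1))) ×
        (Fin (n - 2) → ZMod (2 * n * (n - 1))) × (ZMod 2 × ZMod 2)))) := by
  constructor
  · exact fun h_odd => nonempty_smithGroup_johnsonLap_addEquiv hn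
      (nonempty_excessGroup_addEquiv_of_odd h_odd)
  · exact fun h_even => nonempty_smithGroup_johnsonLap_addEquiv hn
      (nonempty_excessGroup_addEquiv_of_even h_even)
end
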